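/- arXiv:2006.07927 — 2 statements merged into one kernel-verified Lean document; each statement's English description precedes it below -/
import Mathlib

section
/- The function q_s has infinitely many infinite level sets: the set {q ∈ (1,2] : L(q) is infinite} is infinite, where L(q) = {x > 0 : q_s(x) = q}. -/
/-!
Infinitely many infinite level sets of `q_s`.

For each `j ≥ 5` one base `q_j ∈ (7/4, 11/6)` is produced whose level set is infinite, and the
bases are pairwise distinct. Let `Φ_j` (`phi`) replace each letter `e_a` of a binary sequence by
the block `e_a e_a (ē_a e_a)^j ē_{a+1}`, with the bar denoting reflection. The
lexicographically largest tail after a digit `0` in any `Φ_j(e)` is `α = Φ_j(1 0^∞)` (`phi_tail`),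
and `q_j` is the base in which `α` is an expansion of `1` (`exists_base`, `base_ne`). A Parry-type
criterion (`parry_le`) then shows that `Φ_j(e)` is a unique expansion in base `q_j` whenever `e` is
not eventually constant (`phi_uni`).

The points of the level set are `x_k`, with expansion `1 Φ_j(0 1^{k+1} 0 1^∞)` (`pt j k`) in base
`q = q_j`; they strictly decrease in `k` (`pt_strictAnti`). It remains to prove `q_s(x_k) = q`.

* Upper bound (`pt_upper`): changing the letters far out to an alternating sequence gives a
  sequence that is a unique expansion in base `q`, hence in every larger base, and whose value is
  slightly above `x_k` in base `q`. By the intermediate value theorem it represents `x_k` in a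
  base slightly above `q`.
* Lower bound (`pt_lower`): suppose `x_k` has a unique expansion in a base `p < q`. Since
  `x_k > 13/20`, its first digit is `1` (`first_digit_one`). Let `c` be the reflection of the
  remaining digits and `T = Φ_j(1 0^{k+1} 1 0^∞)` the corresponding sequence for base `q`. Then `c`
  exceeds `T` lexicographically because the base has dropped, and uniqueness keeps `c` and all its
  tails after a `0` at most `α`. But `T` agrees with `α` up to an index `M`, has `0` for `1` there
  and continues with `α` itself, so `c` agrees with `α` through `M` (`no_smaller_base`). The tail
  of `α` after `M` is within `1/60` of the reflection of `α`, the least value a tail after a `1`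
  may take. Since `c` is worth less than `1` in base `p`, this leaves room only for `q - p` to be
  tiny compared with `q^{-(M+1)}`. But as `c` has `1` in place `M` where `T` has `0`, it can
  represent the same number `x_k` only if `q - p` is not that small
  (`numeric_contradiction`).
-/

open Filter Set

noncomputable section

/-- `d` is a `q`-expansion of `x`: all digits lie in `{0,1}` and
`x = ∑_{i=1}^∞ d_i q^{-i}`.  Here `d i` stands for the digit `d_{i+1}`. -/
def IsExpansion (q x : ℝ) (d : ℕ → ℕ) : Prop :=
  (∀ i, d i ≤ 1) ∧ x = ∑' i : ℕ, (d i : ℝ) / q ^ (i + 1)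

/-- `𝒰(x)`: the set of bases `q ∈ (1,2]` in which `x` has a unique expansion. -/
def UnivSet (x : ℝ) : Set ℝ :=
  {q | q ∈ Set.Ioc (1 : ℝ) 2 ∧ ∃! d : ℕ → ℕ, IsExpansion q x d}

/-- `q_s(x) = inf 𝒰(x)`. -/
def qs (x : ℝ) : ℝ := sInf (UnivSet x)

/-- The level set `L(q) = {x > 0 : q_s(x) = q}`. -/
def levelSet (q : ℝ) : Set ℝ := {x | 0 < x ∧ qs x = q}

/-- The golden ratio `q_G = (1+√5)/2`. -/
def qG : ℝ := (1 + Real.sqrt 5) / 2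

/-- The Thue–Morse sequence: `tm i = s_i mod 2`, where `s_i` is the number of
`1`s in the binary representation of `i`. -/
def tm (i : ℕ) : ℕ := (Nat.digits 2 i).sum % 2

/-- The set `S ⊆ ℕ`: `2, 3, 4 ∈ S`, and for `k ≥ 2` and `2^k < n ≤ 2^{k+1}`,
`n ∈ S` iff `n > 3·2^{k-1}` and `n - 3·2^{k-1} ∈ S`; no other elements. -/
inductive memS : ℕ → Prop
  | two : memS 2
  | three : memS 3
  | four : memS 4
  | step (k n : ℕ) (hk : 2 ≤ k) (h1 : 2 ^ k < n) (h2 : n ≤ 2 ^ (k + 1))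
      (h3 : 3 * 2 ^ (k - 1) < n) (h : memS (n - 3 * 2 ^ (k - 1))) : memS n


namespace UniqueExpansion

open Topology

/-- All digits of `d` lie in `{0,1}`. -/
def Bin (d : ℕ → ℕ) : Prop := ∀ i, d i ≤ 1

/-- The value `∑_{i ≥ 1} d_i q^{-i}` of a digit sequence in base `q`, with `d i` standing for
the digit `d_{i+1}`. -/
def val (q : ℝ) (d : ℕ → ℕ) : ℝ := ∑' i : ℕ, (d i : ℝ) / q ^ (i + 1)

/-- The `k`-fold left shift. -/
def sh (k : ℕ) (d : ℕ → ℕ) : ℕ → ℕ := fun i => d (i + k)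

/-- The reflection `d ↦ 1 - d`; meaningful for binary sequences. -/
def co (d : ℕ → ℕ) : ℕ → ℕ := fun i => 1 - d i

/-- Strict lexicographic order `b < a` between binary sequences. -/
def Gt (a b : ℕ → ℕ) : Prop := ∃ n, (∀ i < n, a i = b i) ∧ a n = 1 ∧ b n = 0

/-- The value form of the criterion for `d` to be a unique expansion in base `q`: every tail
following a digit `0` is worth less than `1`, and so is the reflection of every tail following
a digit `1`. -/
def Uni (q : ℝ) (d : ℕ → ℕ) : Prop :=
  ∀ i, (d i = 0 → val q (sh (i + 1) d) < 1) ∧ (d i = 1 → val q (sh (i + 1) (co d)) < 1)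

lemma Bin.sh {d : ℕ → ℕ} (h : Bin d) (k : ℕ) : Bin (sh k d) := fun i => h (i + k)

lemma Bin.co (d : ℕ → ℕ) : Bin (co d) := fun i => Nat.sub_le 1 (d i)

lemma sh_sh (a b : ℕ) (d : ℕ → ℕ) : sh a (sh b d) = sh (b + a) d := by
  funext i; simp [sh]; congr 1; omega

lemma co_sh (a : ℕ) (d : ℕ → ℕ) : co (sh a d) = sh a (co d) := rfl

lemma co_co {d : ℕ → ℕ} (h : Bin d) : co (co d) = d := by
  funext i; have := h i; simp only [co]; omega

lemma Bin.cases {d : ℕ → ℕ} (h : Bin d) (i : ℕ) : d i = 0 ∨ d i = 1 := by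
  have := h i; omega

lemma exists_first_diff {u v : ℕ → ℕ} (hu : Bin u) (hv : Bin v) (h : u ≠ v) :
    Gt u v ∨ Gt v u := by
  have hex : ∃ n, u n ≠ v n := Function.ne_iff.mp h
  have hlt : ∀ i < Nat.find hex, u i = v i := fun i hi => by
    simpa using Nat.find_min hex hi
  have hne := Nat.find_spec hex
  rcases hu.cases (Nat.find hex) with h1 | h1 <;> rcases hv.cases (Nat.find hex) with h2 | h2
  · omega
  · exact Or.inr ⟨_, fun i hi => (hlt i hi).symm, h2, h1⟩
  · exact Or.inl ⟨_, hlt, h1, h2⟩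
  · omega

/-! ### Values of digit sequences -/

lemma hasSum_geom {q : ℝ} (hq : 1 < q) : HasSum (fun i : ℕ => 1 / q ^ (i + 1)) (1 / (q - 1)) := by
  have h := (hasSum_geometric_of_lt_one (r := q⁻¹) (by positivity)
    (inv_lt_one_of_one_lt₀ hq)).mul_left q⁻¹
  have h2 : q - 1 ≠ 0 := by linarith
  have h3 : q ≠ 0 := by linarith
  have e1 : (fun i : ℕ => 1 / q ^ (i + 1)) = fun i => q⁻¹ * q⁻¹ ^ i := by
    funext i; rw [pow_succ, inv_pow]; field_simp
  have e2 : 1 / (q - 1) = q⁻¹ * (1 - q⁻¹)⁻¹ := by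
    have : 1 - q⁻¹ = (q - 1) / q := by field_simp
    rw [this]; field_simp
  rw [e1, e2]; exact h

lemma term_le {q : ℝ} (hq : 1 < q) {d : ℕ → ℕ} (hd : Bin d) (i : ℕ) :
    (d i : ℝ) / q ^ (i + 1) ≤ 1 / q ^ (i + 1) := by
  have : (d i : ℝ) ≤ 1 := by exact_mod_cast hd i
  gcongr

lemma summable_val {q : ℝ} (hq : 1 < q) {d : ℕ → ℕ} (hd : Bin d) :
    Summable (fun i : ℕ => (d i : ℝ) / q ^ (i + 1)) :=
  Summable.of_nonneg_of_le (fun i => by positivity) (term_le hq hd) (hasSum_geom hq).summable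

lemma val_nonneg {q : ℝ} (hq : 1 < q) (d : ℕ → ℕ) : 0 ≤ val q d :=
  tsum_nonneg fun i => by positivity

lemma val_le {q : ℝ} (hq : 1 < q) {d : ℕ → ℕ} (hd : Bin d) : val q d ≤ 1 / (q - 1) := by
  rw [← (hasSum_geom hq).tsum_eq]
  exact (summable_val hq hd).tsum_le_tsum (term_le hq hd) (hasSum_geom hq).summable

lemma val_co {q : ℝ} (hq : 1 < q) {d : ℕ → ℕ} (hd : Bin d) :
    val q (co d) = 1 / (q - 1) - val q d := by
  rw [← (hasSum_geom hq).tsum_eq, val, val, ← (hasSum_geom hq).summable.tsum_sub (summable_val hq hd)]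
  congr 1; funext i
  rw [co, Nat.cast_sub (hd i)]; push_cast; ring

lemma val_split {q : ℝ} (hq : 1 < q) {d : ℕ → ℕ} (hd : Bin d) (n : ℕ) :
    val q d = ∑ i ∈ Finset.range n, (d i : ℝ) / q ^ (i + 1) + val q (sh n d) / q ^ n := by
  rw [val, ← (summable_val hq hd).sum_add_tsum_nat_add n, val, ← tsum_div_const]
  congr 1; congr 1; funext i
  rw [sh, div_div, ← pow_add]; congr 2; ring

lemma val_cons {q : ℝ} (hq : 1 < q) {d : ℕ → ℕ} (hd : Bin d) :
    val q d = (d 0 + val q (sh 1 d)) / q := by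
  rw [val_split hq hd 1]; simp; ring

/-- The difference of values of two sequences, in terms of the tails after the first place
where they differ. -/
lemma val_sub {q : ℝ} (hq : 1 < q) {u v : ℕ → ℕ} (hu : Bin u) (hv : Bin v) {n : ℕ}
    (h : ∀ i < n, v i = u i) (h1 : v n = 1) (h0 : u n = 0) :
    val q v - val q u = (1 + val q (sh (n + 1) v) - val q (sh (n + 1) u)) / q ^ (n + 1) := by
  rw [val_split hq hu (n + 1), val_split hq hv (n + 1), Finset.sum_range_succ,
    Finset.sum_range_succ, h1, h0, Finset.sum_congr rfl (fun i hi => by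
      rw [h i (Finset.mem_range.mp hi)])]
  push_cast; ring

lemma val_anti {p q : ℝ} (hp : 1 < p) (hpq : p ≤ q) {d : ℕ → ℕ} (hd : Bin d) :
    val q d ≤ val p d := by
  refine (summable_val (hp.trans_le hpq) hd).tsum_le_tsum (fun i => ?_) (summable_val hp hd)
  have : 0 < p := by linarith
  gcongr

lemma val_strictAnti {p q : ℝ} (hp : 1 < p) (hpq : p < q) {d : ℕ → ℕ} (hd : Bin d)
    (h0 : d 0 = 1) : val q d < val p d := by
  rw [val_cons hp hd, val_cons (hp.trans hpq) hd, h0]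
  have h1 := val_anti hp hpq.le (hd.sh 1)
  have h2 := val_nonneg (hp.trans hpq) (sh 1 d)
  have : 0 < p := by linarith
  calc _ < ((1:ℕ) + val q (sh 1 d)) / p := by
        apply div_lt_div_of_pos_left _ this hpq
        push_cast; linarith
    _ ≤ _ := by gcongr

lemma val_pos {q : ℝ} (hq : 1 < q) {d : ℕ → ℕ} (hd : Bin d) {n : ℕ} (h : d n = 1) :
    0 < val q d := by
  have : 0 < q := by linarith
  refine (summable_val hq hd).tsum_pos (fun i => by positivity) n ?_
  rw [h]; push_cast; positivity

lemma continuousOn_val {a b : ℝ} (ha : 1 < a) {d : ℕ → ℕ} (hd : Bin d) :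
    ContinuousOn (fun q => val q d) (Icc a b) := by
  refine continuousOn_tsum (u := fun i => 1 / a ^ (i + 1)) (fun i => ?_) (hasSum_geom ha).summable ?_
  · refine continuousOn_const.div (by fun_prop) fun x hx => ?_
    have : 0 < x := by linarith [hx.1]
    positivity
  · intro i x hx
    have h1 : (d i : ℝ) ≤ 1 := by exact_mod_cast hd i
    have h2 : 0 < a := by linarith
    have h3 : 0 < x := by linarith [hx.1]
    rw [Real.norm_of_nonneg (by positivity)]
    have := hx.1
    gcongr

/-! ### The criterion for unique expansions -/

/-- Every `y ∈ [0, 1/(q-1)]` has an expansion in base `q ∈ (1,2]`, by the greedy algorithm. -/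
lemma exists_expansion {q : ℝ} (hq : 1 < q) (hq2 : q ≤ 2) {y : ℝ} (hy0 : 0 ≤ y)
    (hy1 : y ≤ 1 / (q - 1)) : ∃ d, Bin d ∧ val q d = y := by
  classical
  have hq1 : 0 < q - 1 := by linarith
  have hq0 : 0 < q := by linarith
  -- `r n` is the remainder after `n` greedy digits, rescaled by `q ^ n`
  let step : ℝ → ℝ := fun z => q * z - (if 1 ≤ q * z then 1 else 0)
  let r : ℕ → ℝ := fun n => step^[n] y
  let d : ℕ → ℕ := fun n => if 1 ≤ q * r n then 1 else 0
  have hr : ∀ n, r (n + 1) = q * r n - d n := fun n => by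
    simp only [r, d, Function.iterate_succ_apply', step]; split_ifs <;> simp
  have hb : ∀ n, 0 ≤ r n ∧ r n ≤ 1 / (q - 1) := by
    intro n
    induction n with
    | zero => exact ⟨hy0, hy1⟩
    | succ n ih =>
      rw [hr]
      have h1 : q * r n ≤ 1 / (q - 1) + 1 := by
        have : q * (1 / (q - 1)) = 1 / (q - 1) + 1 := by field_simp; ring
        rw [← this]; exact mul_le_mul_of_nonneg_left ih.2 hq0.le
      have h2 : 1 ≤ 1 / (q - 1) := by rw [le_div_iff₀ hq1]; linarith
      have h3 : 0 ≤ q * r n := mul_nonneg hq0.le ih.1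
      by_cases h : 1 ≤ q * r n
      · simp only [d, h, if_true]; push_cast; constructor <;> linarith
      · simp only [d, h, if_false]; push_cast; push Not at h; constructor <;> linarith
  have hd : Bin d := fun n => by simp only [d]; split_ifs <;> simp
  refine ⟨d, hd, ?_⟩
  have hpart : ∀ n, ∑ i ∈ Finset.range n, (d i : ℝ) / q ^ (i + 1) = y - r n / q ^ n := by
    intro n
    induction n with
    | zero => simp [r]
    | succ n ih => rw [Finset.sum_range_succ, ih, hr]; field_simp; ring
  have hlim : Tendsto (fun n => y - r n / q ^ n) atTop (𝓝 (y - 0)) := by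
    refine tendsto_const_nhds.sub ?_
    have h0 : Tendsto (fun n : ℕ => 1 / (q - 1) * (q⁻¹) ^ n) atTop (𝓝 0) := by
      simpa using (tendsto_pow_atTop_nhds_zero_of_lt_one (by positivity)
        (inv_lt_one_of_one_lt₀ hq)).const_mul (1 / (q - 1))
    refine squeeze_zero (fun n => div_nonneg (hb n).1 (by positivity)) (fun n => ?_) h0
    rw [inv_pow, ← div_eq_mul_inv]
    have := (hb n).2
    gcongr
  have h1 := (summable_val hq hd).hasSum.tendsto_sum_nat
  simp only [hpart] at h1
  have := tendsto_nhds_unique h1 hlim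
  rw [val, this, sub_zero]

lemma isExpansion_iff {q x : ℝ} {d : ℕ → ℕ} : IsExpansion q x d ↔ Bin d ∧ x = val q d := Iff.rfl

lemma unique_of_uni {q : ℝ} (hq : 1 < q) {d : ℕ → ℕ} (hd : Bin d) (hU : Uni q d) :
    ∃! d', IsExpansion q (val q d) d' := by
  refine ⟨d, ⟨hd, rfl⟩, fun d' hd' => ?_⟩
  obtain ⟨hb, hv⟩ := isExpansion_iff.mp hd'
  have hq0 : 0 < q := by linarith
  by_contra hne
  rcases exists_first_diff hb hd hne with ⟨n, hn, h1, h0⟩ | ⟨n, hn, h1, h0⟩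
  · have h := val_sub hq hd hb hn h1 h0
    have h2 := (hU n).1 h0
    have h3 := val_nonneg hq (sh (n + 1) d')
    have : 0 < (1 + val q (sh (n + 1) d') - val q (sh (n + 1) d)) / q ^ (n + 1) := by
      apply div_pos <;> [linarith; positivity]
    linarith
  · have h := val_sub hq hb hd hn h1 h0
    have h2 := (hU n).2 h1
    rw [← co_sh, val_co hq (hd.sh _)] at h2
    have h3 := val_le hq (hb.sh (n + 1))
    have : 0 < (1 + val q (sh (n + 1) d) - val q (sh (n + 1) d')) / q ^ (n + 1) := by
      apply div_pos <;> [linarith; positivity]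
    linarith

/-- A tail of value at least `1` after a digit `0` would allow that digit to be changed to `1`. -/
lemma tail_lt_of_unique {q : ℝ} (hq : 1 < q) (hq2 : q ≤ 2) {d : ℕ → ℕ} (hd : Bin d)
    (hu : ∀ d', Bin d' → val q d' = val q d → d' = d) {n : ℕ} (h0 : d n = 0) :
    val q (sh (n + 1) d) < 1 := by
  by_contra! hge
  obtain ⟨s, hs, hsv⟩ := exists_expansion hq hq2 (y := val q (sh (n + 1) d) - 1) (by linarith)
    (by linarith [val_le hq (hd.sh (n + 1))])
  let d' : ℕ → ℕ := fun i => if i < n then d i else if i = n then 1 else s (i - (n + 1))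
  have hd' : Bin d' := fun i => by
    simp only [d']; split_ifs <;> [exact hd i; exact le_rfl; exact hs _]
  have htail : sh (n + 1) d' = s := by
    funext i; simp only [sh, d']
    rw [if_neg (by omega), if_neg (by omega), Nat.add_sub_cancel]
  have h := val_sub hq hd hd' (n := n) (fun i hi => by simp [d', hi]) (by simp [d']) h0
  rw [htail, hsv] at h
  have : d' = d := hu d' hd' (by
    rw [← sub_eq_zero, h]; ring)
  have h2 : d' n = 1 := by simp [d']
  rw [this] at h2; omega

lemma uni_of_unique {q x : ℝ} (hq : 1 < q) (hq2 : q ≤ 2) (h : ∃! d, IsExpansion q x d) :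
    ∃ d, Bin d ∧ x = val q d ∧ Uni q d := by
  obtain ⟨d, ⟨hd, hx⟩, hu⟩ := h
  refine ⟨d, hd, hx, fun i => ⟨fun h0 => ?_, fun h1 => ?_⟩⟩
  · refine tail_lt_of_unique hq hq2 hd (fun d' hd' hv => hu d' ⟨hd', ?_⟩) h0
    rw [hx]; exact hv.symm
  · refine tail_lt_of_unique hq hq2 (Bin.co d) (fun d' hd' hv => ?_) (by simp [co, h1])
    have : co d' = d := hu _ ⟨Bin.co d', by
      change x = val q (co d')
      rw [val_co hq hd', hv, val_co hq hd, hx]; simp [val]⟩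
    rw [← this, co_co hd']

lemma Uni.sh {q : ℝ} {d : ℕ → ℕ} (h : Uni q d) (k : ℕ) : Uni q (sh k d) := fun i => by
  have := h (i + k)
  rw [co_sh, sh_sh, sh_sh, show k + (i + 1) = i + k + 1 by omega]
  exact this

lemma Uni.mono {p q : ℝ} (hp : 1 < p) (hpq : p ≤ q) {d : ℕ → ℕ} (hd : Bin d) (h : Uni p d) :
    Uni q d := fun i =>
  ⟨fun h0 => (val_anti hp hpq (hd.sh _)).trans_lt ((h i).1 h0),
    fun h1 => (val_anti hp hpq ((Bin.co d).sh _)).trans_lt ((h i).2 h1)⟩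

lemma Uni.co {q : ℝ} {d : ℕ → ℕ} (hd : Bin d) (h : Uni q d) : Uni q (co d) := fun i => by
  rw [co_co hd]
  simp only [UniqueExpansion.co]
  have := hd i
  exact ⟨fun h0 => (h i).2 (by omega), fun h1 => (h i).1 (by omega)⟩

/-! ### Lexicographic comparison with the expansion of `1` -/

/-- Parry-type criterion: if `α` is an expansion of `1` and every tail of `u` following a `0`
is lexicographically at most `α`, then these tails have value at most `1`. -/
lemma parry_le {q : ℝ} (hq : 1 < q) {α u : ℕ → ℕ} (hα : Bin α) (hα1 : val q α = 1) (hu : Bin u)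
    (h : ∀ i, u i = 0 → Gt α (sh (i + 1) u) ∨ sh (i + 1) u = α) :
    ∀ i, u i = 0 → val q (sh (i + 1) u) ≤ 1 := by
  have hq0 : 0 < q := by linarith
  -- each comparison with `α` improves the error bound by a factor of at least `q`
  have key : ∀ n : ℕ, ∀ i, u i = 0 → val q (sh (i + 1) u) ≤ 1 + 1 / (q - 1) * q⁻¹ ^ n := by
    intro n
    induction n with
    | zero => intro i _; have := val_le hq (hu.sh (i + 1)); simp at this ⊢; linarith
    | succ n ih =>
      intro i hi
      have hpos : 0 ≤ 1 / (q - 1) * q⁻¹ ^ n := by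
        have : 0 < q - 1 := by linarith
        positivity
      rcases h i hi with ⟨m, hm, h1, h0⟩ | he
      · have hs := val_sub hq (hu.sh (i + 1)) hα hm h1 h0
        rw [hα1, sh_sh] at hs
        have h2 := ih (m + (i + 1)) h0
        rw [show m + (i + 1) + 1 = i + 1 + (m + 1) by omega] at h2
        have h3 := val_nonneg hq (sh (m + 1) α)
        have h4 : -(1 / (q - 1) * q⁻¹ ^ n) / q ^ (m + 1)
            ≤ (1 + val q (sh (m + 1) α) - val q (sh (i + 1 + (m + 1)) u)) / q ^ (m + 1) := by
          gcongr; linarith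
        have h5 : 1 / (q - 1) * q⁻¹ ^ n / q ^ (m + 1) ≤ 1 / (q - 1) * q⁻¹ ^ n / q := by
          gcongr; exact le_self_pow₀ hq.le (by omega)
        have h6 : 1 / (q - 1) * q⁻¹ ^ n / q = 1 / (q - 1) * q⁻¹ ^ (n + 1) := by
          rw [pow_succ]; ring
        rw [neg_div] at h4
        linarith
      · rw [he, hα1]
        have : 0 < q - 1 := by linarith
        have : 0 ≤ 1 / (q - 1) * q⁻¹ ^ (n + 1) := by positivity
        linarith
  intro i hi
  have hlim : Tendsto (fun n : ℕ => 1 + 1 / (q - 1) * q⁻¹ ^ n) atTop (𝓝 1) := by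
    simpa using ((tendsto_pow_atTop_nhds_zero_of_lt_one (r := q⁻¹) (by positivity)
      (inv_lt_one_of_one_lt₀ hq)).const_mul (1 / (q - 1))).const_add 1
  exact ge_of_tendsto' hlim fun n => key n i hi

/-- The strict version of lexicographic monotonicity of values. -/
lemma val_lt_of_gt {q : ℝ} (hq : 1 < q) {u v : ℕ → ℕ} (hu : Bin u) (hv : Bin v) {n : ℕ}
    (h : ∀ i < n, v i = u i) (h1 : v n = 1) (h0 : u n = 0)
    (ht : val q (sh (n + 1) u) ≤ 1) {k : ℕ} (hk : n < k) (hvk : v k = 1) : val q u < val q v := by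
  have hs := val_sub hq hu hv h h1 h0
  have h2 : 0 < val q (sh (n + 1) v) := val_pos hq (hv.sh _) (n := k - (n + 1)) (by
    simp only [sh]; rw [Nat.sub_add_cancel (by omega)]; exact hvk)
  have : 0 < (1 + val q (sh (n + 1) v) - val q (sh (n + 1) u)) / q ^ (n + 1) := by
    apply div_pos <;> [linarith; positivity]
  linarith

/-- If tails of `α` after a `0` have value at most `1` in base `q`, then a sequence worth less
than `1` in a base `p ≤ q` cannot exceed `α` lexicographically. -/
lemma not_gt_of_val_lt {p q : ℝ} (hp : 1 < p) (hpq : p ≤ q) {α c : ℕ → ℕ} (hα : Bin α)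
    (hα1 : val q α = 1) (hV : ∀ i, α i = 0 → val q (sh (i + 1) α) ≤ 1) (hc : Bin c)
    (h : val p c < 1) : ¬ Gt c α := by
  rintro ⟨n, hn, h1, h0⟩
  have hq : 1 < q := hp.trans_le hpq
  have hs := val_sub hq hα hc hn h1 h0
  have h2 := hV n h0
  have h3 := val_nonneg hq (sh (n + 1) c)
  have : 0 ≤ (1 + val q (sh (n + 1) c) - val q (sh (n + 1) α)) / q ^ (n + 1) := by
    apply div_nonneg <;> [linarith; positivity]
  linarith [val_anti hp hpq hc]

lemma prefix_sub_ge {p q : ℝ} (hp : 1 < p) (hpq : p ≤ q) {α : ℕ → ℕ} (h0 : α 0 = 1) {m : ℕ}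
    (hm : 0 < m) : 1 / p - 1 / q ≤ ∑ i ∈ Finset.range m, (α i : ℝ) / p ^ (i + 1)
      - ∑ i ∈ Finset.range m, (α i : ℝ) / q ^ (i + 1) := by
  rw [← Finset.sum_sub_distrib]
  have hp0 : 0 < p := by linarith
  have hnn : ∀ i ∈ Finset.range m, 0 ≤ (α i : ℝ) / p ^ (i + 1) - (α i : ℝ) / q ^ (i + 1) := by
    intro i _
    rw [sub_nonneg]; gcongr
  have := Finset.single_le_sum hnn (Finset.mem_range.mpr hm)
  simpa [h0] using this

/-- The numerical contradiction behind `no_smaller_base`.  Here `A = π_q(α₁…α_m)`,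
`B = π_p(α₁…α_m)`, `Q = q⁻ᵐ`, `P = p⁻ᵐ`, `β` is the tail of `α` after `m` digits, and `D` is the
value in base `p` of the reflected competitor.  On the one hand `D < 1` gives `B - A < Q / 60`, so
`q - p` is less than about `Q / 18`.  On the other hand `D - A` is at least `(q - p) * 36 / 121 + Q / 5`
by its digits and at most `(q - p) * 32 / 9` by `hx`, so `q - p` is more than about `Q / 16.3`. -/
lemma numeric_contradiction {p q A B D Q P β : ℝ} (hq1 : 7 / 4 < q) (hq2 : q < 11 / 6)
    (hp : 8 / 5 < p) (hpq : p < q) (hQ : 0 < Q) (hQP : Q ≤ P) (hA0 : 0 ≤ A)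
    (hA : A + Q * β = 1) (hβ : β ≤ 1 / (q - 1) - 1 + 1 / 60)
    (hB : B + P * (1 / (p - 1) - 1) ≤ D) (hD : D < 1)
    (hx : 1 / (p - 1) - D / p = 1 / (q - 1) - A / q) (hAB : 1 / p - 1 / q ≤ B - A) : False := by
  set γ := 1 / (p - 1) with hγ
  set κ := 1 / (q - 1) with hκ
  have hp1 : 0 < p - 1 := by linarith
  have hq1' : 0 < q - 1 := by linarith
  have e1 : γ - κ = (q - p) * (γ * κ) := by rw [hγ, hκ]; field_simp; ring
  have hκ1 : 6 / 5 < κ := by rw [hκ, lt_div_iff₀ hq1']; linarith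
  have hκ2 : κ < 4 / 3 := by rw [hκ, div_lt_iff₀ hq1']; linarith
  have hγ2 : γ < 5 / 3 := by rw [hγ, div_lt_iff₀ hp1]; linarith
  have hκ0 : 0 < κ := by linarith
  have hγκ : κ ≤ γ := by rw [hγ, hκ]; gcongr
  have hd : 0 < q - p := by linarith
  have e2 : 1 / p - 1 / q = (q - p) / (p * q) := by
    have : p ≠ 0 := by linarith
    have : q ≠ 0 := by linarith
    field_simp
  have e3 : (q - p) * (36 / 121) ≤ 1 / p - 1 / q := by
    rw [e2, le_div_iff₀ (by nlinarith)]
    have : p * q ≤ 121 / 36 := by nlinarith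
    nlinarith
  -- bound `D - A` by `(q - p) * p * γ * κ`
  have e4 : D = p * (γ - κ) + p / q * A := by
    have : p ≠ 0 := by linarith
    have : q ≠ 0 := by linarith
    have h : D / p = γ - κ + A / q := by linarith
    calc D = p * (D / p) := by field_simp
      _ = _ := by rw [h]; ring
  have hpA : p / q * A ≤ A := by
    apply mul_le_of_le_one_left hA0
    rw [div_le_one (by linarith)]; exact hpq.le
  have e5 : p * γ = 1 + γ := by rw [hγ]; field_simp; ring
  have e6 : D - A ≤ (q - p) * (32 / 9) := by
    have h1 : p * (γ - κ) = (q - p) * ((1 + γ) * κ) := by rw [e1, ← e5]; ring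
    have h2 : (1 + γ) * κ ≤ 32 / 9 := by nlinarith
    have h3 := mul_le_mul_of_nonneg_left h2 hd.le
    linarith
  have h7 : Q * (κ - 1) ≤ P * (γ - 1) := by
    apply mul_le_mul hQP <;> linarith
  have h8 : Q * β ≤ Q * (κ - 1 + 1 / 60) := by gcongr
  have h9 : Q * (1 / 5) ≤ Q * (κ - 1) := by gcongr; linarith
  nlinarith

/-- Let `α` be the expansion of `1` in base `q`, let `T` agree with `α` before the index `M` where
`T` has a `0`, `α` a `1`, and let `T` continue with `α` from there.  If the tail of `α` after
that place is close to the reflection of `α`, then the number whose expansion in base `q` is `1`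
followed by the reflection of `T` has no unique expansion starting with `1` in a smaller base. -/
lemma no_smaller_base {p q : ℝ} (hq1 : 7 / 4 < q) (hq2 : q < 11 / 6) (hp : 1 < p) (hpq : p < q)
    {α T d : ℕ → ℕ} {M : ℕ} (hα : Bin α) (hα1 : val q α = 1)
    (hV : ∀ i, α i = 0 → val q (sh (i + 1) α) ≤ 1) (ha0 : α 0 = 1) (ha1 : α 1 = 1) (hM1 : 1 ≤ M)
    (hT : Bin T) (hTα : ∀ i < M, α i = T i) (hαM : α M = 1) (hTM : T M = 0)
    (hTt : sh (M + 1) T = α) (hβ : val q (sh (M + 1) α) ≤ 1 / (q - 1) - 1 + 1 / 60)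
    (hd : Bin d) (hU : Uni p d) (hd0 : d 0 = 1)
    (hx : val p d = 1 / (q - 1) - val q T / q) : False := by
  have hq : 1 < q := by linarith
  have hp0 : 0 < p := by linarith
  set c := co (sh 1 d) with hc
  have hcb : Bin c := Bin.co _
  have hcU : Uni p c := (hU.sh 1).co (hd.sh 1)
  have hD1 : val p c < 1 := by rw [hc, co_sh]; exact (hU 0).2 hd0
  have hp1 : 0 < p - 1 := by linarith
  have hq1' : 0 < q - 1 := by linarith
  have hdv : val p d = 1 / (p - 1) - val p c / p := by
    have h1 := val_co hp (hd.sh 1)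
    rw [val_cons hp hd, hd0, show val p (sh 1 d) = 1 / (p - 1) - val p c by rw [hc, h1]; ring]
    field_simp; push_cast; ring
  -- passing to the smaller base forces the digits of the competitor to drop
  have hTc : val p T < val p c := by
    have h1 := val_anti hp hpq.le (Bin.co T)
    rw [val_co hp hT, val_co hq hT] at h1
    have h2 : val q T ≤ 1 / (q - 1) := val_le hq hT
    have h3 : (1 + (1 / (q - 1) - val q T)) / q < (1 + (1 / (q - 1) - val q T)) / p :=
      div_lt_div_of_pos_left (by linarith) hp0 hpq
    have h4 : (1 + (1 / (q - 1) - val q T)) / p ≤ (1 + (1 / (p - 1) - val p T)) / p := by gcongr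
    have h5 : (1 + (1 / (q - 1) - val q T)) / q = 1 / (q - 1) - val q T / q := by
      have : q ≠ 0 := by linarith
      field_simp; ring
    have h6 : (1 + (1 / (p - 1) - val p c)) / p = 1 / (p - 1) - val p c / p := by
      field_simp; ring
    have h7 : (1 + (1 / (p - 1) - val p c)) / p < (1 + (1 / (p - 1) - val p T)) / p := by linarith
    rw [div_lt_div_iff_of_pos_right hp0] at h7
    linarith
  have hcα : ¬ Gt c α := not_gt_of_val_lt hp hpq.le hα hα1 hV hcb hD1
  have hgt : Gt c T := by
    rcases exists_first_diff hcb hT (by rintro h; rw [h] at hTc; exact lt_irrefl _ hTc) with h | h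
    · exact h
    · exfalso
      obtain ⟨n, hn, h1, h0⟩ := h
      have hs := val_sub hp hcb hT hn h1 h0
      have h2 := (hcU n).1 h0
      have h3 := val_nonneg hp (sh (n + 1) T)
      have : 0 < (1 + val p (sh (n + 1) T) - val p (sh (n + 1) c)) / p ^ (n + 1) := by
        apply div_pos <;> [linarith; positivity]
      linarith
  -- the competitor lies between `T` and `α`, so it agrees with `α` up to the index `M`
  obtain ⟨n, hn, hcn, hTn⟩ := hgt
  have hnM : n = M := by
    rcases lt_trichotomy n M with h | h | h
    · exact absurd ⟨n, fun i hi => by rw [hn i hi, hTα i (hi.trans h)], hcn,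
        by rw [hTα n h, hTn]⟩ hcα
    · exact h
    · have hcM : c M = 0 := by rw [hn M h, hTM]
      refine absurd ⟨n - (M + 1), fun i hi => ?_, ?_, ?_⟩
        (not_gt_of_val_lt hp hpq.le hα hα1 hV (hcb.sh (M + 1)) ((hcU M).1 hcM))
      · rw [← hTt]; exact hn _ (by omega)
      · simp only [sh]; rw [Nat.sub_add_cancel (by omega)]; exact hcn
      · rw [← hTt]; simp only [sh]; rw [Nat.sub_add_cancel (by omega)]; exact hTn
  subst hnM
  have hag : ∀ i < n + 1, c i = α i := by
    intro i hi
    rcases Nat.lt_succ_iff_lt_or_eq.mp hi with h | h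
    · rw [hn i h, hTα i h]
    · rw [h, hcn, hαM]
  have hp85 : 8 / 5 < p := by
    have h1 := val_split hp hcb 2
    have h2 := val_nonneg hp (sh 2 c)
    have h3 : 0 ≤ val p (sh 2 c) / p ^ 2 := by positivity
    rw [Finset.sum_range_succ, Finset.sum_range_one, hag 0 (by omega), hag 1 (by omega),
      ha0, ha1] at h1
    have h4 : 1 / p + 1 / p ^ 2 < 1 := by
      have : (((1:ℕ):ℝ) / p ^ (0 + 1) + ((1:ℕ):ℝ) / p ^ (1 + 1)) = 1 / p + 1 / p ^ 2 := by norm_num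
      linarith
    have h5 : 1 / p + 1 / p ^ 2 = (p + 1) / p ^ 2 := by field_simp
    rw [h5, div_lt_one (by positivity)] at h4
    nlinarith
  have hsplit := val_split hp hcb (n + 1)
  rw [Finset.sum_congr rfl fun i hi => by rw [hag i (Finset.mem_range.mp hi)]] at hsplit
  have hqsplit := val_split hq hα (n + 1)
  have hTv := val_sub hq hT hα hTα hαM hTM
  rw [hTt, hα1] at hTv
  have hTA : val q T = ∑ i ∈ Finset.range (n + 1), (α i : ℝ) / q ^ (i + 1) := by
    have : (1 + val q (sh (n + 1) α) - 1) / q ^ (n + 1) = val q (sh (n + 1) α) / q ^ (n + 1) := by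
      ring
    linarith
  have htail : 1 / (p - 1) - 1 ≤ val p (sh (n + 1) c) := by
    have h1 := (hcU n).2 hcn
    rw [← co_sh, val_co hp (hcb.sh _)] at h1
    linarith
  refine numeric_contradiction (A := val q T) (D := val p c) (β := val q (sh (n + 1) α))
    (B := ∑ i ∈ Finset.range (n + 1), (α i : ℝ) / p ^ (i + 1))
    (Q := 1 / q ^ (n + 1)) (P := 1 / p ^ (n + 1)) hq1 hq2 hp85 hpq (by positivity) ?_
    (val_nonneg hq T) ?_ hβ ?_ hD1 (by rw [← hdv, hx]) ?_
  · gcongr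
  · rw [hα1] at hqsplit
    rw [hTA, one_div_mul_eq_div]; exact hqsplit.symm
  · have : 1 / p ^ (n + 1) * (1 / (p - 1) - 1) ≤ 1 / p ^ (n + 1) * val p (sh (n + 1) c) := by gcongr
    rw [hsplit]; linarith [show val p (sh (n + 1) c) / p ^ (n + 1)
      = 1 / p ^ (n + 1) * val p (sh (n + 1) c) by ring]
  · rw [hTA]; exact prefix_sub_ge hp hpq.le ha0 (by omega)

/-- A digit `0` followed later by a `1` in a unique expansion forces `p (p - 1) > 1`; hence a
unique expansion starting with `0` of a number `x` needs `p < 1 / x`, which is impossible when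
`x > 13/20`. -/
lemma first_digit_one {p : ℝ} (hp : 1 < p) {d : ℕ → ℕ} (hd : Bin d) (hU : Uni p d)
    (hx : 13 / 20 < val p d) : d 0 = 1 := by
  rcases hd.cases 0 with h0 | h0
  swap
  · exact h0
  exfalso
  have hp0 : 0 < p := by linarith
  have hp1 : 0 < p - 1 := by linarith
  have h1 := (hU 0).1 h0
  have h2 : val p d < 1 / p := by
    rw [val_cons hp hd, h0]; push_cast; rw [zero_add]; gcongr
  have h3 : p < 20 / 13 := by
    have : 13 / 20 < 1 / p := hx.trans h2
    rw [lt_div_iff₀ hp0] at this; linarith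
  have hex : ∃ n, d n = 1 := by
    by_contra! hne
    have : ∀ n, d n = 0 := fun n => (hd.cases n).resolve_right (hne n)
    have : val p d = 0 := by simp [val, this]
    linarith
  obtain ⟨n, hn⟩ : ∃ n, Nat.find hex = n + 1 := by
    refine Nat.exists_eq_succ_of_ne_zero fun h => ?_
    have := Nat.find_spec hex; rw [h] at this; omega
  have hd1 : d (n + 1) = 1 := hn ▸ Nat.find_spec hex
  have hd0 : d n = 0 := (hd.cases n).resolve_right (Nat.find_min hex (by omega))
  have h4 := (hU n).1 hd0
  have h5 := (hU (n + 1)).2 hd1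
  rw [← co_sh, val_co hp (hd.sh _)] at h5
  rw [val_cons hp (hd.sh _), sh_sh] at h4
  have h6 : sh (n + 1) d 0 = 1 := by simpa [sh] using hd1
  rw [h6, div_lt_one hp0] at h4
  have h7 : 1 / (p - 1) < p := by push_cast at h4; linarith
  rw [div_lt_iff₀ hp1] at h7
  nlinarith

/-! ### The block substitution -/

/-- The substitution replacing the letter `e_a` of a binary sequence by the block
`e_a e_a (ē_a e_a)^j ē_{a+1}` of length `2j+3`, where the bar is reflection. -/
def phi (j : ℕ) (e : ℕ → ℕ) : ℕ → ℕ := fun n =>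
  if n % (2 * j + 3) = 0 ∨ n % (2 * j + 3) % 2 = 1 then e (n / (2 * j + 3))
  else if n % (2 * j + 3) = 2 * j + 2 then 1 - e (n / (2 * j + 3) + 1)
  else 1 - e (n / (2 * j + 3))

/-- The sequence `1 0 0 0 …`. -/
def unit : ℕ → ℕ := fun i => if i = 0 then 1 else 0

/-- The sequence `Φ_j(1 0^∞) = 11(01)^j1 (00(10)^j1)^∞`, the lexicographically largest tail
following a `0` that occurs in sequences `Φ_j(e)`. -/
def alpha (j : ℕ) : ℕ → ℕ := phi j unit

lemma unit_bin : Bin unit := fun i => by simp only [unit]; split_ifs <;> omega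

lemma phi_bin (j : ℕ) {e : ℕ → ℕ} (he : Bin e) : Bin (phi j e) := fun n => by
  simp only [phi]; split_ifs <;> [exact he _; omega; omega]

lemma phi_add (j : ℕ) (e : ℕ → ℕ) (a : ℕ) {r : ℕ} (hr : r < 2 * j + 3) :
    phi j e ((2 * j + 3) * a + r) =
      if r = 0 ∨ r % 2 = 1 then e a else if r = 2 * j + 2 then 1 - e (a + 1) else 1 - e a := by
  have h1 : ((2 * j + 3) * a + r) % (2 * j + 3) = r := by
    rw [Nat.mul_add_mod]; exact Nat.mod_eq_of_lt hr
  have h2 : ((2 * j + 3) * a + r) / (2 * j + 3) = a := by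
    rw [Nat.mul_add_div (by omega), Nat.div_eq_of_lt hr, add_zero]
  simp only [phi, h1, h2]

lemma phi_sh (j : ℕ) (e : ℕ → ℕ) (a : ℕ) :
    sh ((2 * j + 3) * a) (phi j e) = phi j (sh a e) := by
  funext n
  simp only [sh, phi, Nat.add_mul_mod_self_left, Nat.add_mul_div_left _ _ (show 0 < 2 * j + 3 by omega)]
  rw [show n / (2 * j + 3) + a + 1 = n / (2 * j + 3) + 1 + a by omega]

lemma phi_co (j : ℕ) {e : ℕ → ℕ} (he : Bin e) : co (phi j e) = phi j (co e) := by
  funext n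
  have h1 := he (n / (2 * j + 3)); have h2 := he (n / (2 * j + 3) + 1)
  simp only [co, phi]; split_ifs <;> omega

/-- The last digit of a block is a reflected copy of the next letter, so `Φ_j` reverses the
lexicographic order of sequences with the same first letter. -/
lemma phi_first_diff (j : ℕ) {e f : ℕ → ℕ} {m : ℕ} (h : ∀ i < m + 1, e i = f i)
    (he : e (m + 1) = 1) (hf : f (m + 1) = 0) :
    (∀ n < (2 * j + 3) * m + (2 * j + 2), phi j f n = phi j e n) ∧
      phi j f ((2 * j + 3) * m + (2 * j + 2)) = 1 ∧
      phi j e ((2 * j + 3) * m + (2 * j + 2)) = 0 := by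
  refine ⟨fun n hn => ?_, ?_, ?_⟩
  · have hdm := Nat.div_add_mod n (2 * j + 3)
    have hr := Nat.mod_lt n (show 0 < 2 * j + 3 by omega)
    have ha : n / (2 * j + 3) < m + 1 := by
      rw [Nat.div_lt_iff_lt_mul (by omega)]; nlinarith
    rw [← hdm, phi_add j _ _ hr, phi_add j _ _ hr, h _ ha]
    by_cases hl : n % (2 * j + 3) = 2 * j + 2
    · have : n / (2 * j + 3) ≠ m := by
        rintro rfl; omega
      rw [h (n / (2 * j + 3) + 1) (by omega)]
    · simp only [hl, if_false]
  · rw [phi_add j _ _ (by omega), if_neg (by omega), if_pos rfl, hf]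
  · rw [phi_add j _ _ (by omega), if_neg (by omega), if_pos rfl, he]

lemma phi_small (j : ℕ) (e : ℕ → ℕ) {r : ℕ} (hr : r < 2 * j + 3) : phi j e r =
    if r = 0 ∨ r % 2 = 1 then e 0 else if r = 2 * j + 2 then 1 - e 1 else 1 - e 0 := by
  simpa using phi_add j e 0 hr

/-- The first digits of `alpha j` before the end of the first block. -/
lemma alpha_small (j : ℕ) {r : ℕ} (hr : r < 2 * j + 2) :
    alpha j r = if r = 0 ∨ r % 2 = 1 then 1 else 0 := by
  rw [alpha, phi_small j _ (by omega)]
  simp only [unit]; split_ifs <;> omega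

lemma alpha_gt_unit {j : ℕ} {e : ℕ → ℕ} (he : Bin e) (h0 : e 0 = 1) {k : ℕ} (hk : e (k + 1) = 1) :
    Gt (alpha j) (phi j e) := by
  classical
  have hex : ∃ m, e (m + 1) = 1 := ⟨k, hk⟩
  obtain ⟨h1, h2, h3⟩ := phi_first_diff j (e := e) (f := unit) (m := Nat.find hex) (fun i hi => by
    rcases i with _ | i
    · simp [h0, unit]
    · have := Nat.find_min hex (m := i) (by omega)
      have := he (i + 1)
      simp only [unit]; simp; omega) (Nat.find_spec hex) (by simp [unit])
  exact ⟨_, h1, h2, h3⟩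

/-- Every tail of `Φ_j(e)` that follows a digit `0` is lexicographically at most `alpha j`, with
equality only if `e` ends in `0^∞`. -/
lemma phi_tail {j : ℕ} (hj : 1 ≤ j) {e : ℕ → ℕ} (he : Bin e) {n : ℕ} (hn : phi j e n = 0) :
    Gt (alpha j) (sh (n + 1) (phi j e)) ∨
      (sh (n + 1) (phi j e) = alpha j ∧ ∃ N, ∀ i ≥ N, e i = 0) := by
  have a0 : alpha j 0 = 1 := by rw [alpha_small j (by omega)]; simp
  have a1 : alpha j 1 = 1 := by rw [alpha_small j (by omega)]; simp
  have a2 : alpha j 2 = 0 := by rw [alpha_small j (by omega)]; simp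
  have a3 : alpha j 3 = 1 := by rw [alpha_small j (by omega)]; simp
  have g0 : ∀ u : ℕ → ℕ, u 0 = 0 → Gt (alpha j) u := fun u h => ⟨0, by simp, a0, h⟩
  have g1 : ∀ u : ℕ → ℕ, u 0 = 1 → u 1 = 0 → Gt (alpha j) u := fun u h h' =>
    ⟨1, fun i hi => by interval_cases i; rw [a0, h], a1, h'⟩
  have g3 : ∀ u : ℕ → ℕ, u 0 = 1 → u 1 = 1 → u 2 = 0 → u 3 = 0 → Gt (alpha j) u :=
    fun u h h' h2 h3 => ⟨3, fun i hi => by interval_cases i <;> omega, a3, h3⟩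
  have hdm := Nat.div_add_mod n (2 * j + 3)
  have hr := Nat.mod_lt n (show 0 < 2 * j + 3 by omega)
  set a := n / (2 * j + 3)
  set r := n % (2 * j + 3)
  rw [← hdm, phi_add j e a hr] at hn
  have hb0 := he a
  have hb1 := he (a + 1)
  -- `D s` is the digit at offset `s` in the same block, `D' s` the one in the next block
  have D : ∀ s k, r + 1 + k = s → s < 2 * j + 3 → sh (n + 1) (phi j e) k =
      if s = 0 ∨ s % 2 = 1 then e a else if s = 2 * j + 2 then 1 - e (a + 1) else 1 - e a := by
    intro s k hs hs'
    rw [← phi_add j e a hs', sh]; congr 1; omega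
  have D' : ∀ s k, r + 1 + k = 2 * j + 3 + s → s < 2 → sh (n + 1) (phi j e) k = e (a + 1) := by
    intro s k hs hs'
    have := phi_add j e (a + 1) (r := s) (by omega)
    rw [if_pos (by omega)] at this
    rw [← this, sh]; congr 1; rw [mul_add]; omega
  by_cases hl : r = 2 * j + 2
  · -- the tail starts a new block with letter `1`
    rw [if_neg (by omega), if_pos hl] at hn
    have he1 : e (a + 1) = 1 := by omega
    have hsh : sh (n + 1) (phi j e) = phi j (sh (a + 1) e) := by
      rw [← phi_sh]; congr 1; rw [mul_add]; omega
    rw [hsh]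
    by_cases hz : ∃ k, sh (a + 1) e (k + 1) = 1
    · obtain ⟨k, hk⟩ := hz
      exact Or.inl (alpha_gt_unit (he.sh _) (by simpa [sh] using he1) hk)
    · push Not at hz
      have hz' : ∀ k, e (a + 2 + k) = 0 := fun k => by
        have h1 := hz k
        have h2 := he (a + 2 + k)
        simp only [sh] at h1
        rw [show k + 1 + (a + 1) = a + 2 + k by omega] at h1
        omega
      refine Or.inr ⟨?_, a + 2, fun i hi => by
        rw [show i = a + 2 + (i - (a + 2)) by omega]; exact hz' _⟩
      rw [alpha]; congr 1; funext i
      rcases i with _ | i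
      · simpa [sh, unit] using he1
      · simp only [sh, unit]; rw [show i + 1 + (a + 1) = a + 2 + i by omega, hz' i]; simp
  · left
    by_cases hodd : r % 2 = 1
    · rw [if_pos (by omega)] at hn
      by_cases hl2 : r = 2 * j + 1
      · have h0 := D (2 * j + 2) 0 (by omega) (by omega)
        rw [if_neg (by omega), if_pos rfl] at h0
        have h1 := D' 0 1 (by omega) (by omega)
        rcases he.cases (a + 1) with h | h
        · exact g1 _ (by omega) (by omega)
        · exact g0 _ (by omega)
      · have h0 := D (r + 1) 0 (by omega) (by omega)
        rw [if_neg (by omega), if_neg (by omega)] at h0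
        have h1 := D (r + 2) 1 (by omega) (by omega)
        rw [if_pos (by omega)] at h1
        exact g1 _ (by omega) (by omega)
    · by_cases hr0 : r = 0
      · rw [if_pos (by omega)] at hn
        have h0 := D 1 0 (by omega) (by omega)
        rw [if_pos (by omega)] at h0
        exact g0 _ (by omega)
      · rw [if_neg (by omega), if_neg hl] at hn
        have h0 := D (r + 1) 0 (by omega) (by omega)
        rw [if_pos (by omega)] at h0
        by_cases hl2 : r = 2 * j
        · have h1 := D (2 * j + 2) 1 (by omega) (by omega)
          rw [if_neg (by omega), if_pos rfl] at h1
          have h2 := D' 0 2 (by omega) (by omega)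
          have h3 := D' 1 3 (by omega) (by omega)
          rcases he.cases (a + 1) with h | h
          · exact g3 _ (by omega) (by omega) (by omega) (by omega)
          · exact g1 _ (by omega) (by omega)
        · have h1 := D (r + 2) 1 (by omega) (by omega)
          rw [if_neg (by omega), if_neg (by omega)] at h1
          exact g1 _ (by omega) (by omega)

lemma phi_tail_le {j : ℕ} (hj : 1 ≤ j) {q : ℝ} (hq : 1 < q) (hα : val q (alpha j) = 1)
    {e : ℕ → ℕ} (he : Bin e) : ∀ n, phi j e n = 0 → val q (sh (n + 1) (phi j e)) ≤ 1 :=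
  parry_le hq (phi_bin j unit_bin) hα (phi_bin j he) fun _ hn =>
    (phi_tail hj he hn).imp_right And.left

lemma alpha_ones (j N : ℕ) : ∃ k, N < k ∧ alpha j k = 1 := by
  refine ⟨(2 * j + 3) * N + (2 * j + 2), by nlinarith, ?_⟩
  rw [alpha, phi_add j _ _ (by omega), if_neg (by omega), if_pos rfl]; simp [unit]

/-- If `e` is not eventually constant then `Φ_j(e)` is a unique expansion. -/
lemma phi_uni {j : ℕ} (hj : 1 ≤ j) {q : ℝ} (hq : 1 < q) (hα : val q (alpha j) = 1)
    {e : ℕ → ℕ} (he : Bin e) (h0 : ∀ N, ∃ i ≥ N, e i = 0) (h1 : ∀ N, ∃ i ≥ N, e i = 1) :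
    Uni q (phi j e) := by
  have key : ∀ f : ℕ → ℕ, Bin f → (∀ N, ∃ i ≥ N, f i = 1) → ∀ n, phi j f n = 0 →
      val q (sh (n + 1) (phi j f)) < 1 := by
    intro f hf hf1 n hn
    rcases phi_tail hj hf hn with ⟨m, hm, ha, hu⟩ | ⟨_, N, hN⟩
    · obtain ⟨k, hk, hka⟩ := alpha_ones j m
      rw [← hα]
      refine val_lt_of_gt hq ((phi_bin j hf).sh _) (phi_bin j unit_bin) hm ha hu ?_ hk hka
      rw [sh_sh, show n + 1 + (m + 1) = m + (n + 1) + 1 by omega]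
      exact phi_tail_le hj hq hα hf _ hu
    · obtain ⟨i, hi, hi1⟩ := hf1 N
      rw [hN i hi] at hi1; omega
  intro n
  refine ⟨key e he h1 n, fun hn => ?_⟩
  rw [phi_co j he]
  refine key _ (Bin.co e) (fun N => ?_) n ?_
  · obtain ⟨i, hi, h⟩ := h0 N
    exact ⟨i, hi, by simp [co, h]⟩
  · rw [← phi_co j he]; simp [co, hn]

/-! ### The bases and the points of their level sets -/

lemma exists_base {j : ℕ} (hj : 2 ≤ j) : ∃ q : ℝ, 7 / 4 < q ∧ q < 11 / 6 ∧ val q (alpha j) = 1 := by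
  have hb : Bin (alpha j) := phi_bin j unit_bin
  have h1 : 1 < val (7 / 4) (alpha j) := by
    have h := val_split (q := 7 / 4) (by norm_num) hb 4
    have h2 : 0 ≤ val (7 / 4) (sh 4 (alpha j)) / (7 / 4) ^ 4 :=
      div_nonneg (val_nonneg (by norm_num) _) (by norm_num)
    simp only [Finset.sum_range_succ, Finset.sum_range_zero, alpha_small j (r := 0) (by omega),
      alpha_small j (r := 1) (by omega), alpha_small j (r := 2) (by omega),
      alpha_small j (r := 3) (by omega)] at h
    norm_num at h h2
    linarith
  have h2 : val (11 / 6) (alpha j) < 1 := by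
    have h := val_split (q := 11 / 6) (by norm_num) (Bin.co (alpha j)) 5
    have h2 : 0 ≤ val (11 / 6) (sh 5 (co (alpha j))) / (11 / 6) ^ 5 :=
      div_nonneg (val_nonneg (by norm_num) _) (by norm_num)
    rw [val_co (by norm_num) hb] at h
    simp only [Finset.sum_range_succ, Finset.sum_range_zero, co,
      alpha_small j (r := 0) (by omega),
      alpha_small j (r := 1) (by omega), alpha_small j (r := 2) (by omega),
      alpha_small j (r := 3) (by omega), alpha_small j (r := 4) (by omega)] at h
    norm_num at h h2
    linarith
  obtain ⟨q, ⟨hq1, hq2⟩, hq⟩ := intermediate_value_Icc' (by norm_num)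
    (continuousOn_val (a := 7 / 4) (b := 11 / 6) (by norm_num) hb) ⟨h2.le, h1.le⟩
  simp only at hq
  refine ⟨q, lt_of_le_of_ne hq1 ?_, lt_of_le_of_ne hq2 ?_, hq⟩
  · rintro rfl; linarith
  · rintro rfl; linarith

/-- The bases belonging to different `j` are different, since `alpha i` and `alpha j` are
lexicographically comparable and both have small tails. -/
lemma base_ne {i j : ℕ} (hij : i < j) {q : ℝ} (hq : 1 < q) (hi : val q (alpha i) = 1)
    (hj : val q (alpha j) = 1) : False := by
  have h0 : alpha j (2 * i + 2) = 0 := by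
    rw [alpha_small j (by omega), if_neg (by omega)]
  obtain ⟨k, hk, hk1⟩ := alpha_ones i (2 * i + 2)
  have := val_lt_of_gt hq (phi_bin j unit_bin) (phi_bin i unit_bin) (n := 2 * i + 2)
    (fun r hr => by
      change alpha i r = alpha j r
      rw [alpha_small i hr, alpha_small j (by omega)])
    (by rw [phi_small i _ (by omega), if_neg (by omega), if_pos rfl]; simp [unit]) h0
    (phi_tail_le (by omega) hq hj unit_bin _ h0) hk hk1
  change val q (alpha j) < val q (alpha i) at this
  linarith

/-- Sequences sharing their first `n` digits have close values. -/
lemma val_close {q : ℝ} (hq : 1 < q) {u v : ℕ → ℕ} (hu : Bin u) (hv : Bin v) {n : ℕ}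
    (h : ∀ i < n, u i = v i) : val q u ≤ val q v + 1 / (q - 1) / q ^ n := by
  rw [val_split hq hu n, val_split hq hv n,
    Finset.sum_congr rfl fun i hi => by rw [h i (Finset.mem_range.mp hi)]]
  have h1 : val q (sh n u) / q ^ n ≤ 1 / (q - 1) / q ^ n := by
    have := val_le hq (hu.sh n)
    gcongr
  have h2 : 0 ≤ val q (sh n v) / q ^ n := div_nonneg (val_nonneg hq _) (by positivity)
  linarith

/-- The letter sequence `0 0 1^{k+1} 0 1^∞`. -/
def ek (k : ℕ) : ℕ → ℕ := fun i => if i < 2 ∨ i = k + 3 then 0 else 1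

lemma ek_bin (k : ℕ) : Bin (ek k) := fun i => by simp only [ek]; split_ifs <;> omega

/-- The digit sequence `1 Φ_j(0 1^{k+1} 0 1^∞)`, written as a tail of `Φ_j(0 0 1^{k+1} 0 1^∞)`. -/
def pt (j k : ℕ) : ℕ → ℕ := sh (2 * j + 2) (phi j (ek k))

lemma pt_bin (j k : ℕ) : Bin (pt j k) := (phi_bin j (ek_bin k)).sh _

lemma pt_zero (j k : ℕ) : pt j k 0 = 1 := by
  rw [pt, sh, zero_add, phi_small j _ (by omega), if_neg (by omega), if_pos rfl]; simp [ek]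

lemma pt_val {q : ℝ} (hq : 1 < q) (j k : ℕ) :
    val q (pt j k) = 1 / (q - 1) - val q (phi j (sh 1 (co (ek k)))) / q := by
  have h1 : sh 1 (pt j k) = phi j (sh 1 (ek k)) := by
    rw [← phi_sh, pt, sh_sh]; congr 1; ring
  rw [val_cons hq (pt_bin j k), pt_zero, h1, ← co_sh, ← phi_co j ((ek_bin k).sh 1),
    val_co hq (phi_bin j ((ek_bin k).sh 1))]
  have : q - 1 ≠ 0 := by linarith
  have : q ≠ 0 := by linarith
  field_simp; push_cast; ring

lemma pt_gt {j : ℕ} (hj : 1 ≤ j) {q : ℝ} (hq1 : 7 / 4 < q) (hq2 : q < 11 / 6)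
    (hα : val q (alpha j) = 1) (k : ℕ) : 13 / 20 < val q (pt j k) := by
  have hq : 1 < q := by linarith
  have h1 : val q (phi j (sh 1 (co (ek k)))) ≤ 1 := by
    have := phi_tail_le hj hq hα (Bin.co (ek k)) (2 * j + 2) (by
      rw [phi_small j _ (by omega), if_neg (by omega), if_pos rfl]; simp [co, ek])
    rwa [show 2 * j + 2 + 1 = (2 * j + 3) * 1 by ring, phi_sh] at this
  rw [pt_val hq]
  have h2 : val q (phi j (sh 1 (co (ek k)))) / q ≤ 1 / q := by gcongr
  have h3 : 1 / (q - 1) - 1 / q = 1 / (q * (q - 1)) := by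
    have : q - 1 ≠ 0 := by linarith
    field_simp; ring
  have h4 : 13 / 20 < 1 / (q * (q - 1)) := by
    rw [lt_div_iff₀ (by nlinarith)]; nlinarith
  linarith

lemma pt_strictAnti {j : ℕ} (hj : 1 ≤ j) {q : ℝ} (hq : 1 < q) (hα : val q (alpha j) = 1) :
    StrictMono fun k => - val q (pt j k) := by
  intro k l hkl
  obtain ⟨h1, h2, h3⟩ := phi_first_diff j (e := ek l) (f := ek k) (m := k + 2)
    (fun i hi => by simp only [ek]; split_ifs <;> omega)
    (by simp only [ek]; rw [if_neg (by omega)]) (by simp only [ek]; simp)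
  have h := val_lt_of_gt hq (pt_bin j l) (pt_bin j k) (n := (2 * j + 3) * (k + 2))
    (fun i hi => h1 _ (by omega)) h2 h3 (by
      rw [pt, sh_sh, show 2 * j + 2 + ((2 * j + 3) * (k + 2) + 1)
        = (2 * j + 3) * (k + 2) + (2 * j + 2) + 1 by ring]
      exact phi_tail_le hj hq hα (ek_bin l) _ h3)
    (k := (2 * j + 3) * (k + 4) + 1) (by nlinarith) (by
      rw [pt, sh, show (2 * j + 3) * (k + 4) + 1 + (2 * j + 2) = (2 * j + 3) * (k + 5) + 0 by ring,
        phi_add j _ _ (by omega), if_pos (by omega), ek, if_neg (by omega)])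
  simpa using h

/-- No base below `q` gives the number with expansion `pt j k` a unique expansion. -/
lemma pt_lower {j : ℕ} (hj : 5 ≤ j) {p q : ℝ} (hq1 : 7 / 4 < q) (hq2 : q < 11 / 6)
    (hα : val q (alpha j) = 1) (k : ℕ) (hp : p ∈ UnivSet (val q (pt j k))) : q ≤ p := by
  by_contra! hpq
  have hq : 1 < q := by linarith
  obtain ⟨⟨hp1, hp2⟩, hu⟩ := hp
  obtain ⟨d, hd, hdv, hU⟩ := uni_of_unique hp1 hp2 hu
  have hd0 := first_digit_one hp1 hd hU (by rw [← hdv]; exact pt_gt (by omega) hq1 hq2 hα k)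
  obtain ⟨h1, h2, h3⟩ := phi_first_diff j (e := sh 1 (co (ek k))) (f := unit) (m := k + 1)
    (fun i hi => by simp only [ek, sh, co, unit]; split_ifs <;> omega)
    (by simp [ek, sh, co]) (by simp [unit])
  have hM : (2 * j + 3) * (k + 1) + (2 * j + 2) + 1 = (2 * j + 3) * (k + 2) := by ring
  refine no_smaller_base hq1 hq2 hp1 hpq (phi_bin j unit_bin) hα
    (phi_tail_le (by omega) hq hα unit_bin)
    (by rw [phi_small j _ (by omega)]; simp [unit]) (by rw [phi_small j _ (by omega)]; simp [unit])
    (by omega) (phi_bin j ((Bin.co (ek k)).sh 1)) h1 h2 h3 ?_ ?_ hd hU hd0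
    (by rw [← hdv, pt_val hq])
  · rw [hM, phi_sh, sh_sh]; congr 1; funext i; simp only [sh, co, ek, unit]
    split_ifs <;> omega
  · rw [hM, phi_sh]
    have hz := val_close hq (phi_bin j (unit_bin.sh (k + 2))) (phi_bin j (Bin.co unit))
      (n := 2 * j + 2) (fun i hi => by
        rw [phi_small j _ (by omega), phi_small j _ (by omega)]
        simp only [sh, co, unit]; split_ifs <;> omega)
    rw [← phi_co j unit_bin, val_co hq (phi_bin j unit_bin)] at hz
    change _ ≤ 1 / (q - 1) - val q (alpha j) + _ at hz
    rw [hα] at hz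
    have hpow : (80 : ℝ) ≤ q ^ (2 * j + 2) := by
      calc (80 : ℝ) ≤ (7 / 4) ^ 12 := by norm_num
        _ ≤ q ^ 12 := by gcongr
        _ ≤ q ^ (2 * j + 2) := pow_le_pow_right₀ hq.le (by omega)
    have h5 : 1 / (q - 1) ≤ 4 / 3 := by rw [div_le_iff₀ (by linarith)]; linarith
    have h6 : 1 / (q - 1) / q ^ (2 * j + 2) ≤ 1 / 60 := by
      rw [div_le_iff₀ (by positivity)]; linarith
    linarith

/-- The letter sequence agreeing with `ek k` before `n` and alternating afterwards. -/
def en (k n : ℕ) : ℕ → ℕ := fun i => if i < n then ek k i else i % 2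

lemma en_bin (k n : ℕ) : Bin (en k n) := fun i => by
  have := ek_bin k i
  simp only [en]; split_ifs <;> omega

/-- Replacing the letters of `pt j k` far out by an alternating sequence gives unique expansions
of the same number in bases arbitrarily close to `q` from above. -/
lemma pt_upper {j : ℕ} (hj : 1 ≤ j) {q : ℝ} (hq : 1 < q) (hq2 : q < 11 / 6)
    (hα : val q (alpha j) = 1) (k : ℕ) {w : ℝ} (hw : q < w) :
    ∃ p ∈ UnivSet (val q (pt j k)), p < w := by
  obtain ⟨b, hqb, hb⟩ := exists_between (lt_min hw hq2)
  have hbw : b < w := hb.trans_le (min_le_left _ _)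
  have hb2 : b < 11 / 6 := hb.trans_le (min_le_right _ _)
  have hb1 : 1 < b := hq.trans hqb
  have hlt := val_strictAnti hq hqb (pt_bin j k) (pt_zero j k)
  have hlim : Tendsto (fun n : ℕ => 1 / (b - 1) / b ^ n) atTop (𝓝 0) := by
    have := (tendsto_pow_atTop_nhds_zero_of_lt_one (r := b⁻¹) (by positivity)
      (inv_lt_one_of_one_lt₀ hb1)).const_mul (1 / (b - 1))
    simpa [div_eq_mul_inv] using this
  obtain ⟨m, hm, hmk⟩ := ((hlim.eventually_lt_const (sub_pos.mpr hlt)).and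
    (eventually_ge_atTop (k + 4))).exists
  set e := en k (m + 3) with he
  set u := sh (2 * j + 2) (phi j e) with hu
  have heb : Bin e := en_bin k _
  have hub : Bin u := (phi_bin j heb).sh _
  have hagree : ∀ i < m, u i = pt j k i := by
    intro i hi
    have hdm := Nat.div_add_mod (i + (2 * j + 2)) (2 * j + 3)
    have hr := Nat.mod_lt (i + (2 * j + 2)) (show 0 < 2 * j + 3 by omega)
    have ha : (i + (2 * j + 2)) / (2 * j + 3) < m + 2 := by
      rw [Nat.div_lt_iff_lt_mul (by omega)]; nlinarith
    rw [hu, pt, sh, sh, ← hdm, phi_add j _ _ hr, phi_add j _ _ hr]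
    generalize (i + (2 * j + 2)) / (2 * j + 3) = a at ha
    have e1 : e a = ek k a := by simp only [he, en]; rw [if_pos (by omega)]
    have e2 : e (a + 1) = ek k (a + 1) := by simp only [he, en]; rw [if_pos (by omega)]
    rw [e1, e2]
  have hub_lt : val b u < val q (pt j k) := by
    have := val_close hb1 hub (pt_bin j k) hagree
    linarith
  have huq : val q (pt j k) ≤ val q u := by
    -- the first even index from `m + 3` on is where the two letter sequences part
    obtain ⟨i, hi1, hi2, hi3⟩ : ∃ i, m + 3 ≤ i + 1 ∧ (i + 1) % 2 = 0 ∧ i + 1 ≤ m + 4 := by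
      rcases Nat.even_or_odd m with ⟨r, hr⟩ | ⟨r, hr⟩
      · exact ⟨m + 3, by omega, by omega, by omega⟩
      · exact ⟨m + 2, by omega, by omega, by omega⟩
    obtain ⟨h1, h2, h3⟩ := phi_first_diff j (e := ek k) (f := e) (m := i)
      (fun l hl => by
        simp only [he, en]
        split_ifs with h
        · rfl
        · simp only [ek]; rw [if_neg (by omega)]; omega)
      (by simp only [ek]; rw [if_neg (by omega)])
      (by simp only [he, en]; rw [if_neg (by omega), hi2])
    have hs := val_sub hq (pt_bin j k) hub (n := (2 * j + 3) * i)
      (fun l hl => h1 _ (by omega)) h2 h3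
    have h4 := phi_tail_le hj hq hα (ek_bin k) _ h3
    have e5 : sh ((2 * j + 3) * i + 1) (pt j k)
        = sh ((2 * j + 3) * i + (2 * j + 2) + 1) (phi j (ek k)) := by
      rw [pt, sh_sh]; congr 1; ring
    rw [e5] at hs
    have h5 := val_nonneg hq (sh ((2 * j + 3) * i + 1) u)
    have : 0 ≤ (1 + val q (sh ((2 * j + 3) * i + 1) u)
        - val q (sh ((2 * j + 3) * i + (2 * j + 2) + 1) (phi j (ek k)))) /
          q ^ ((2 * j + 3) * i + 1) := by
      apply div_nonneg <;> [linarith; positivity]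
    linarith
  obtain ⟨p, ⟨hp1, hp2⟩, hpv⟩ := intermediate_value_Icc' hqb.le
    (continuousOn_val (b := b) hq hub) ⟨hub_lt.le, huq⟩
  simp only at hpv
  have hUq : Uni q (phi j e) := by
    refine phi_uni hj hq hα heb (fun N => ⟨2 * (N + m + 3), by omega, ?_⟩)
      (fun N => ⟨2 * (N + m + 3) + 1, by omega, ?_⟩)
    · simp only [he, en]; rw [if_neg (by omega)]; omega
    · simp only [he, en]; rw [if_neg (by omega)]; omega
  have hUp : Uni p u := (hUq.sh _).mono hq hp1 hub
  refine ⟨p, ⟨⟨by linarith, by linarith⟩, ?_⟩, by linarith⟩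
  rw [← hpv]
  exact unique_of_uni (by linarith) hub hUp

lemma levelSet_infinite {j : ℕ} (hj : 5 ≤ j) {q : ℝ} (hq1 : 7 / 4 < q) (hq2 : q < 11 / 6)
    (hα : val q (alpha j) = 1) : (levelSet q).Infinite := by
  have hq : 1 < q := by linarith
  have hinj : Function.Injective fun k => val q (pt j k) := fun k l h =>
    (pt_strictAnti (by omega) hq hα).injective (by simpa using h)
  refine Set.infinite_of_injective_forall_mem hinj fun k => ⟨?_, ?_⟩
  · exact val_pos hq (pt_bin j k) (pt_zero j k)
  · obtain ⟨p, hp, -⟩ := pt_upper (by omega) hq hq2 hα k (lt_add_one q)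
    exact csInf_eq_of_forall_ge_of_forall_gt_exists_lt ⟨p, hp⟩
      (fun r hr => pt_lower hj hq1 hq2 hα k hr)
      (fun w hw => pt_upper (by omega) hq hq2 hα k hw)

end UniqueExpansion

open UniqueExpansion

/-- `q_s` has infinitely many infinite level sets. -/
theorem infinitely_many_infinite_levelSets :
    {q : ℝ | q ∈ Set.Ioc (1 : ℝ) 2 ∧ (levelSet q).Infinite}.Infinite := by
  choose Q hQ1 hQ2 hQ using fun i : ℕ => exists_base (j := i + 5) (by omega)
  refine Set.infinite_of_injective_forall_mem (f := Q) (fun i l h => ?_) fun i =>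
    ⟨⟨by linarith [hQ1 i], by linarith [hQ2 i]⟩,
      levelSet_infinite (by omega) (hQ1 i) (hQ2 i) (hQ i)⟩
  have hi1 : 1 < Q i := by linarith [hQ1 i]
  rcases lt_trichotomy i l with hlt | heq | hlt
  · exact (base_ne (Nat.add_lt_add_right hlt 5) hi1 (hQ i) (h ▸ hQ l)).elim
  · exact heq
  · exact (base_ne (Nat.add_lt_add_right hlt 5) hi1 (h ▸ hQ l) (hQ i)).elim
end
end

section
/- Let (d_i)_{i≥1} be the sequence consisting of the word 100 followed by the periodic repetition of the block 1000110001100 (so d_1 = 1, d_2 = d_3 = 0, and d_{3+j} for j ≥ 1 is the j-th letter of (1000110001100)^∞), and let r ∈ (1,2) satisfy Σ_{i=1}^∞ d_i r^{-i} = (√5 − 1)/2. Then q_s((√5 − 1)/2) = r, and q_s(x) < r for every x > 0 with x ≠ (√5 − 1)/2; that is, the maximum of q_s on (0,∞) equals r and is attained uniquely at x = (√5 − 1)/2 = 1/q_G. Moreover, r satisfies r^{26} − r^{25} − r^{24} − r^{22} − 2r^{21} − 2r^{18} − 3r^{17} − 2r^{16} − 2r^{14} − 5r^{13} − r^{12}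 − r^{10} − 3r^{9} − r^{8} − r^{5} − r^{4} + 1 = 0. -/
/-!
An expansion `d` of `x` in base `q` is unique exactly when every tail following a digit `0` is
below `1` and every tail following a digit `1` has reflection below `1` (`Univoque.mem`,
`univoque_of_mem`). For a fixed digit sequence these conditions become easier as `q` grows
(`Univoque.mono`), so univoqueness of an eventually periodic sequence on a whole interval of bases
reduces to finitely many rational inequalities at its left end (`univoque_of_cert`). Write `ξ = 1/q_G`,
so that `ξ² + ξ = 1`.

*The value at `ξ`.* In base `r` the extremal sequence is univoque (`base_mem`). Suppose `q < r` and
`ξ` has a univoque expansion `d` in base `q`. The first digit is `1` (`first_digit`), and as long as `d`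
agrees with the extremal sequence its tails are at most those in base `r`, because the recursion
`t ↦ q t - d` is monotone in `q`. Hence at the first disagreement `d` must have the smaller digit. At
the fourth digit this is excluded by the identity `ξ² + ξ = 1` (`fourth_digit`); at a later `1` the word
starting from the preceding first letter of a block `1000110001100` would have too small a tail
(`no_drop`), a fact resting on one narrow inequality (`margin`). If there is no disagreement, one
sequence has the same value `ξ` in two bases, which is impossible.

*Other numbers.* As `q` runs through an interval, the value of a fixed univoque sequence runs through
an interval of `x`, by continuity (`cover`). Finitely many eventually periodic sequences, together with
`0^k(01)^∞` for small `x`, `1^∞` for large `x`, `(01)^∞` just below `ξ` and the extremal sequence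
itself just above `ξ`, cover all `x ≠ ξ` using bases `q < r` only (`qs_lt`).

*The polynomial.* Summing the periodic expansion gives
`ξ (r¹³ - 1) = r¹² + r⁹ + r⁵ + r⁴ + 1`; eliminating `ξ` by `ξ² + ξ = 1` yields the degree 26 equation.
-/

open Filter Set

noncomputable section

/-- The digit sequence `100(1000110001100)^∞` (0-indexed: `maxDigits i` is the
`(i+1)`-st digit). -/
def maxDigits (i : ℕ) : ℕ :=
  if i < 3 then [1, 0, 0].getD i 0
  else [1, 0, 0, 0, 1, 1, 0, 0, 0, 1, 1, 0, 0].getD ((i - 3) % 13) 0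


/-! ### Tails of digit sequences -/

/-- The value in base `q` of the tail `d_n d_{n+1} …` of a digit sequence, so that `tl q d 0` is
the number expanded by `d`. -/
def tl (q : ℝ) (d : ℕ → ℕ) (n : ℕ) : ℝ := ∑' i : ℕ, (d (n + i) : ℝ) / q ^ (i + 1)

lemma isExpansion_iff {q x : ℝ} {d : ℕ → ℕ} :
    IsExpansion q x d ↔ (∀ i, d i ≤ 1) ∧ x = tl q d 0 := by
  simp [IsExpansion, tl]

lemma hasSum_geom {q : ℝ} (hq : 1 < q) : HasSum (fun i : ℕ => 1 / q ^ (i + 1)) (1 / (q - 1)) := by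
  have h := (hasSum_geometric_of_lt_one (r := q⁻¹) (by positivity) (inv_lt_one_of_one_lt₀ hq)).mul_left q⁻¹
  have e₁ : (fun i : ℕ => 1 / q ^ (i + 1)) = fun i => q⁻¹ * q⁻¹ ^ i := by
    funext i
    rw [pow_succ, one_div, mul_inv, inv_pow, mul_comm]
  have e₂ : 1 / (q - 1) = q⁻¹ * (1 - q⁻¹)⁻¹ := by
    rw [← mul_inv, mul_sub, mul_one, mul_inv_cancel₀ (by linarith), one_div]
  rw [e₁, e₂]
  exact h

lemma term_le {q : ℝ} (hq : 1 < q) {d : ℕ → ℕ} (hd : ∀ i, d i ≤ 1) (n i : ℕ) :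
    (d (n + i) : ℝ) / q ^ (i + 1) ≤ 1 / q ^ (i + 1) := by
  have : (d (n + i) : ℝ) ≤ 1 := by exact_mod_cast hd _
  have : 0 < q := by linarith
  gcongr

lemma summable_tl {q : ℝ} (hq : 1 < q) {d : ℕ → ℕ} (hd : ∀ i, d i ≤ 1) (n : ℕ) :
    Summable (fun i : ℕ => (d (n + i) : ℝ) / q ^ (i + 1)) := by
  have : 0 < q := by linarith
  exact Summable.of_nonneg_of_le (fun i => by positivity) (term_le hq hd n) (hasSum_geom hq).summable

lemma tl_nonneg {q : ℝ} (hq : 1 < q) (d : ℕ → ℕ) (n : ℕ) : 0 ≤ tl q d n := by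
  have : 0 < q := by linarith
  exact tsum_nonneg fun i => by positivity

lemma tl_le {q : ℝ} (hq : 1 < q) {d : ℕ → ℕ} (hd : ∀ i, d i ≤ 1) (n : ℕ) :
    tl q d n ≤ 1 / (q - 1) := by
  rw [← (hasSum_geom hq).tsum_eq]
  exact (summable_tl hq hd n).tsum_le_tsum (term_le hq hd n) (hasSum_geom hq).summable

lemma tl_succ {q : ℝ} (hq : 1 < q) {d : ℕ → ℕ} (hd : ∀ i, d i ≤ 1) (n : ℕ) :
    q * tl q d n = d n + tl q d (n + 1) := by
  have h0 : q ≠ 0 := by linarith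
  unfold tl
  rw [(summable_tl hq hd n).tsum_eq_zero_add, mul_add, ← tsum_mul_left]
  congr 1
  · simp [mul_div_cancel₀, h0]
  · refine tsum_congr fun i => ?_
    rw [show n + (i + 1) = n + 1 + i by ring, pow_succ q (i + 1)]
    field_simp

lemma tl_anti {q q' : ℝ} (hq : 1 < q) (hqq : q ≤ q') {d : ℕ → ℕ} (hd : ∀ i, d i ≤ 1) (n : ℕ) :
    tl q' d n ≤ tl q d n := by
  refine (summable_tl (hq.trans_le hqq) hd n).tsum_le_tsum (fun i => ?_) (summable_tl hq hd n)
  have : 0 < q := by linarith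
  gcongr

lemma one_sub_le (d : ℕ → ℕ) (i : ℕ) : 1 - d i ≤ 1 := Nat.sub_le _ _

lemma tl_compl {q : ℝ} (hq : 1 < q) {d : ℕ → ℕ} (hd : ∀ i, d i ≤ 1) (n : ℕ) :
    tl q (fun i => 1 - d i) n = 1 / (q - 1) - tl q d n := by
  rw [← (hasSum_geom hq).tsum_eq]
  unfold tl
  rw [← (hasSum_geom hq).summable.tsum_sub (summable_tl hq hd n)]
  refine tsum_congr fun i => ?_
  rw [Nat.cast_sub (hd _)]
  simp [sub_div]

lemma tl_continuousOn {q₁ q₂ : ℝ} (hq : 1 < q₁) {d : ℕ → ℕ} (hd : ∀ i, d i ≤ 1) (n : ℕ) :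
    ContinuousOn (fun q => tl q d n) (Icc q₁ q₂) := by
  refine continuousOn_tsum (u := fun i : ℕ => 1 / q₁ ^ (i + 1)) (fun i => ?_)
    (hasSum_geom hq).summable (fun i q hq' => ?_)
  · refine ContinuousOn.div (by fun_prop) (by fun_prop) fun q hq' => ?_
    have : 0 < q := by linarith [hq'.1]
    positivity
  · have h0 : 0 < q₁ := by linarith
    have h1 : q₁ ≤ q := hq'.1
    have h2 : 0 < q := by linarith
    rw [Real.norm_of_nonneg (by positivity)]
    refine (term_le (by linarith) hd n i).trans ?_
    gcongr

/-- Two tails agree when the digits do. -/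
lemma tl_congr {q : ℝ} {d e : ℕ → ℕ} {m n : ℕ} (h : ∀ i, d (m + i) = e (n + i)) :
    tl q d m = tl q e n := by
  simp [tl, h]

/-! ### The lexicographic criterion for unique expansions, in terms of tails -/

/-- Every number in `[0, 1/(q-1)]` has an expansion when `q ≤ 2`: iterate the greedy map. -/
lemma exists_expansion {q x : ℝ} (hq : 1 < q) (hq2 : q ≤ 2) (h0 : 0 ≤ x) (h1 : x ≤ 1 / (q - 1)) :
    ∃ d : ℕ → ℕ, (∀ i, d i ≤ 1) ∧ tl q d 0 = x := by
  classical
  let T : ℝ → ℝ := fun t => if 1 ≤ q * t then q * t - 1 else q * t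
  let t : ℕ → ℝ := fun n => T^[n] x
  let d : ℕ → ℕ := fun n => if 1 ≤ q * t n then 1 else 0
  have hq1 : 0 < q - 1 := by linarith
  have htS : ∀ n, t (n + 1) = q * t n - d n := by
    intro n
    simp only [t, d, Function.iterate_succ_apply', T]
    split_ifs <;> simp
  have hb : ∀ n, 0 ≤ t n ∧ t n ≤ 1 / (q - 1) := by
    intro n
    induction n with
    | zero => exact ⟨h0, h1⟩
    | succ n ih =>
      obtain ⟨ih0, ih1⟩ := ih
      rw [le_div_iff₀ hq1] at ih1 ⊢
      rw [htS]
      have h2 : 1 ≤ 1 / (q - 1) := by rw [le_div_iff₀ hq1]; linarith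
      simp only [d]
      split_ifs with h
      · push_cast
        constructor
        · linarith
        · nlinarith
      · push_cast
        constructor
        · have : 0 < q := by linarith
          simp only [sub_zero]
          positivity
        · nlinarith
  have hd : ∀ i, d i ≤ 1 := by
    intro i
    simp only [d]
    split_ifs <;> simp
  refine ⟨d, hd, ?_⟩
  -- The errors `t n - tl q d n` are multiplied by `q` at each step, yet stay bounded.
  have herr : ∀ n, tl q d n - t n = q ^ n * (tl q d 0 - x) := by
    intro n
    induction n with
    | zero => simp [t]
    | succ n ih =>
      rw [htS, pow_succ']
      have := tl_succ hq hd n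
      linear_combination q * ih - this
  by_contra hne
  have hpos : 0 < |tl q d 0 - x| := abs_pos.mpr (sub_ne_zero.mpr hne)
  obtain ⟨n, hn⟩ := pow_unbounded_of_one_lt ((1 / (q - 1)) / |tl q d 0 - x|) hq
  rw [div_lt_iff₀ hpos] at hn
  have h3 : |tl q d n - t n| ≤ 1 / (q - 1) := by
    rw [abs_le]
    have := tl_nonneg hq d n
    have := tl_le hq hd n
    have := hb n
    constructor <;> linarith
  rw [herr, abs_mul, abs_of_pos (by have : 0 < q := by linarith
                                    positivity)] at h3
  linarith

/-- The tail form of the lexicographic characterisation of unique expansions: after a digit `0`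
the tail is below `1`, and after a digit `1` the reflected tail is below `1`. -/
def Univoque (q : ℝ) (d : ℕ → ℕ) : Prop :=
  ∀ n, (d n = 0 → tl q d (n + 1) < 1) ∧ (d n = 1 → 1 / (q - 1) - tl q d (n + 1) < 1)

lemma Univoque.mem {q : ℝ} (hq : 1 < q) (hq2 : q ≤ 2) {d : ℕ → ℕ} (hd : ∀ i, d i ≤ 1)
    (h : Univoque q d) : q ∈ UnivSet (tl q d 0) := by
  refine ⟨⟨hq, hq2⟩, d, isExpansion_iff.2 ⟨hd, rfl⟩, fun e he => ?_⟩
  obtain ⟨he1, he2⟩ := isExpansion_iff.1 he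
  have key : ∀ n, e n = d n ∧ tl q e n = tl q d n := by
    intro n
    induction n with
    | zero =>
      refine (fun h0 => ⟨?_, h0⟩) he2.symm
      have a := tl_succ hq hd 0
      have b := tl_succ hq he1 0
      have c := h 0
      have l := tl_nonneg hq e (0 + 1)
      have u := tl_le hq he1 (0 + 1)
      have := hd 0
      have := he1 0
      interval_cases h1 : d 0 <;> interval_cases h2 : e 0 <;> simp at * <;> nlinarith
    | succ n ih =>
      have h0 : tl q e (n + 1) = tl q d (n + 1) := by
        have a := tl_succ hq hd n
        have b := tl_succ hq he1 n
        rw [ih.1, ih.2] at b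
        linarith
      refine ⟨?_, h0⟩
      have a := tl_succ hq hd (n + 1)
      have b := tl_succ hq he1 (n + 1)
      have c := h (n + 1)
      have l := tl_nonneg hq e (n + 1 + 1)
      have u := tl_le hq he1 (n + 1 + 1)
      have := hd (n + 1)
      have := he1 (n + 1)
      interval_cases h1 : d (n + 1) <;> interval_cases h2 : e (n + 1) <;> simp at * <;> nlinarith
  exact funext fun n => (key n).1

lemma tl_splice {q : ℝ} (hq : 1 < q) {d e : ℕ → ℕ} (hd : ∀ i, d i ≤ 1) (he : ∀ i, e i ≤ 1) (n : ℕ)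
    (hlt : ∀ i < n, d i = e i) (hn : tl q d n = tl q e n) : tl q d 0 = tl q e 0 := by
  induction n with
  | zero => exact hn
  | succ n ih =>
    refine ih (fun i hi => hlt i (by omega)) ?_
    have a := tl_succ hq hd n
    have b := tl_succ hq he n
    rw [hlt n (by omega)] at a
    have : 0 < q := by linarith
    have : q * tl q d n = q * tl q e n := by linarith
    nlinarith

/-- Converse of `Univoque.mem`: if a tail condition fails at `n`, the digit `d n` can be switched
and the expansion completed greedily. -/
lemma univoque_of_mem {q x : ℝ} (h : q ∈ UnivSet x) :
    ∃ d : ℕ → ℕ, (∀ i, d i ≤ 1) ∧ tl q d 0 = x ∧ Univoque q d := by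
  obtain ⟨⟨hq, hq2⟩, d, hd, huniq⟩ := h
  obtain ⟨hd1, hdx⟩ := isExpansion_iff.1 hd
  refine ⟨d, hd1, hdx.symm, fun n => ?_⟩
  have switch : ∀ c : ℕ, c ≤ 1 → c ≠ d n → 0 ≤ q * tl q d n - c →
      q * tl q d n - c ≤ 1 / (q - 1) → False := by
    intro c hc hcd h0 h1
    obtain ⟨f, hf, hfx⟩ := exists_expansion hq hq2 h0 h1
    let e : ℕ → ℕ := fun i => if i < n then d i else if i = n then c else f (i - (n + 1))
    have he : ∀ i, e i ≤ 1 := by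
      intro i
      simp only [e]
      split_ifs
      · exact hd1 i
      · exact hc
      · exact hf _
    have hen : e n = c := by simp [e]
    have h2 : tl q e (n + 1) = tl q f 0 := by
      refine tl_congr fun i => ?_
      have h3 : ¬ n + 1 + i < n := by omega
      have h4 : n + 1 + i ≠ n := by omega
      simp only [e, if_neg h3, if_neg h4]
      congr 1
      omega
    have h5 := tl_splice hq hd1 he n (fun i hi => by simp [e, hi]) (by
      have := tl_succ hq he n
      rw [h2, hfx, hen] at this
      have : q * tl q d n = q * tl q e n := by linarith
      have : 0 < q := by linarith
      nlinarith)
    have h6 := huniq e (isExpansion_iff.2 ⟨he, hdx.trans h5⟩)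
    exact hcd (by rw [← hen, h6])
  have hs := tl_succ hq hd1 n
  have l := tl_nonneg hq d (n + 1)
  have u := tl_le hq hd1 (n + 1)
  constructor
  · intro hn
    by_contra hcon
    rw [hn] at hs
    push_cast at hs
    refine switch 1 le_rfl (by omega) ?_ ?_ <;> push_cast <;> linarith
  · intro hn
    by_contra hcon
    rw [hn] at hs
    push_cast at hs
    refine switch 0 (by omega) (by omega) ?_ ?_ <;> push_cast <;> linarith

/-- Both tail conditions get easier as the base grows. -/
lemma Univoque.mono {q q' : ℝ} (hq : 1 < q) (hqq : q ≤ q') {d : ℕ → ℕ} (hd : ∀ i, d i ≤ 1)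
    (h : Univoque q d) : Univoque q' d := by
  intro n
  refine ⟨fun hn => (tl_anti hq hqq hd _).trans_lt ((h n).1 hn), fun hn => ?_⟩
  have h1 := (h n).2 hn
  rw [← tl_compl hq hd] at h1
  rw [← tl_compl (hq.trans_le hqq) hd]
  exact (tl_anti hq hqq (one_sub_le d) _).trans_lt h1

lemma qs_le {q x : ℝ} (h : q ∈ UnivSet x) : qs x ≤ q :=
  csInf_le ⟨1, fun _ hp => hp.1.1.le⟩ h

/-! ### Eventually periodic sequences and rational certificates -/

/-- The digit sequence `p w w w …`. -/
def dig (p w : List ℕ) (n : ℕ) : ℕ :=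
  if n < p.length then p.getD n 0 else w.getD ((n - p.length) % w.length) 0

/-- The base `a / 10⁸`. Certificates use bases of this form, so as to be integer computations. -/
def base (a : ℕ) : ℝ := a / 10 ^ 8

/-- Numerator, over `a ^ N * (a - 10 ^ 8)`, of the upper bound for `tl (base a) d n` in which the
digits after the first `N` are replaced by ones. -/
def up (a : ℕ) (d : ℕ → ℕ) : ℕ → ℕ → ℕ
  | 0, _ => 10 ^ 8
  | N + 1, n => 10 ^ 8 * (d n * (a ^ N * (a - 10 ^ 8)) + up a d N (n + 1))

/-- Numerator, over `a ^ N`, of the lower bound for `tl (base a) d n` in which the digits after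
the first `N` are replaced by zeros. -/
def low (a : ℕ) (d : ℕ → ℕ) : ℕ → ℕ → ℕ
  | 0, _ => 0
  | N + 1, n => 10 ^ 8 * (d n * a ^ N + low a d N (n + 1))

lemma one_lt_base {a : ℕ} (ha : 10 ^ 8 < a) : 1 < base a := by
  have : ((10 ^ 8 : ℕ) : ℝ) < a := by exact_mod_cast ha
  push_cast at this
  rw [base, one_lt_div (by positivity)]
  linarith

lemma tl_le_up {a : ℕ} (ha : 10 ^ 8 < a) {d : ℕ → ℕ} (hd : ∀ i, d i ≤ 1) (N n : ℕ) :
    tl (base a) d n * ((a ^ N * (a - 10 ^ 8) : ℕ) : ℝ) ≤ up a d N n := by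
  have hq := one_lt_base ha
  have hab : (0 : ℝ) < (a : ℝ) - 10 ^ 8 := by
    have : ((10 ^ 8 : ℕ) : ℝ) < a := by exact_mod_cast ha
    push_cast at this
    linarith
  induction N generalizing n with
  | zero =>
    have h := tl_le hq hd n
    rw [le_div_iff₀ (by linarith)] at h
    simp only [up, base] at h ⊢
    rw [pow_zero, one_mul, Nat.cast_sub ha.le]
    push_cast
    linarith
  | succ N ih =>
    have h1 := tl_succ hq hd n
    have h2 := ih (n + 1)
    have h3 : (a : ℝ) = 10 ^ 8 * base a := by rw [base]; ring
    have h4 : tl (base a) d n * ((a ^ (N + 1) * (a - 10 ^ 8) : ℕ) : ℝ)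
        = 10 ^ 8 * (base a * tl (base a) d n) * ((a ^ N * (a - 10 ^ 8) : ℕ) : ℝ) := by
      rw [pow_succ]
      push_cast
      linear_combination tl (base a) d n * ((a : ℝ) ^ N * ((a - 10 ^ 8 : ℕ) : ℝ)) * h3
    rw [h4, h1, up]
    generalize a ^ N * (a - 10 ^ 8) = M at *
    push_cast
    nlinarith

lemma low_le_tl {a : ℕ} (ha : 10 ^ 8 < a) {d : ℕ → ℕ} (hd : ∀ i, d i ≤ 1) (N n : ℕ) :
    (low a d N n : ℝ) ≤ tl (base a) d n * ((a ^ N : ℕ) : ℝ) := by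
  have hq := one_lt_base ha
  induction N generalizing n with
  | zero => simpa [low] using tl_nonneg hq d n
  | succ N ih =>
    have h1 := tl_succ hq hd n
    have h2 := ih (n + 1)
    have h3 : (a : ℝ) = 10 ^ 8 * base a := by rw [base]; ring
    have h4 : tl (base a) d n * ((a ^ (N + 1) : ℕ) : ℝ)
        = 10 ^ 8 * (base a * tl (base a) d n) * ((a ^ N : ℕ) : ℝ) := by
      rw [pow_succ]
      push_cast
      linear_combination tl (base a) d n * (a : ℝ) ^ N * h3
    rw [h4, h1, low]
    generalize a ^ N = M at *
    push_cast
    nlinarith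

lemma tl_lt_one_of_up {a : ℕ} (ha : 10 ^ 8 < a) {d : ℕ → ℕ} (hd : ∀ i, d i ≤ 1) {N n : ℕ}
    (h : up a d N n < a ^ N * (a - 10 ^ 8)) : tl (base a) d n < 1 := by
  have h1 := tl_le_up ha hd N n
  have h2 : (up a d N n : ℝ) < ((a ^ N * (a - 10 ^ 8) : ℕ) : ℝ) := by exact_mod_cast h
  have h3 : (0 : ℝ) ≤ ((a ^ N * (a - 10 ^ 8) : ℕ) : ℝ) := Nat.cast_nonneg _
  by_contra hcon
  have h4 := mul_le_mul_of_nonneg_right (not_lt.1 hcon) h3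
  rw [one_mul] at h4
  exact absurd (h4.trans h1) (not_le.2 h2)

lemma tl_le_of_up {a c : ℕ} (ha : 10 ^ 8 < a) {d : ℕ → ℕ} (hd : ∀ i, d i ≤ 1) {N n : ℕ}
    (h : up a d N n * 10 ^ 8 ≤ c * (a ^ N * (a - 10 ^ 8))) : tl (base a) d n ≤ c / 10 ^ 8 := by
  have h1 := tl_le_up ha hd N n
  have h2 : (up a d N n : ℝ) * 10 ^ 8 ≤ c * ((a ^ N * (a - 10 ^ 8) : ℕ) : ℝ) := by exact_mod_cast h
  have h3 : (0 : ℝ) < ((a ^ N * (a - 10 ^ 8) : ℕ) : ℝ) :=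
    Nat.cast_pos.2 (Nat.mul_pos (Nat.pow_pos (by omega)) (by omega))
  rw [le_div_iff₀ (by positivity)]
  refine le_of_mul_le_mul_right ?_ h3
  linarith

lemma le_tl_of_low {a c : ℕ} (ha : 10 ^ 8 < a) {d : ℕ → ℕ} (hd : ∀ i, d i ≤ 1) {N n : ℕ}
    (h : c * a ^ N ≤ low a d N n * 10 ^ 8) : c / 10 ^ 8 ≤ tl (base a) d n := by
  have h1 := low_le_tl ha hd N n
  have h2 : (c : ℝ) * ((a ^ N : ℕ) : ℝ) ≤ low a d N n * 10 ^ 8 := by exact_mod_cast h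
  have h3 : (0 : ℝ) < ((a ^ N : ℕ) : ℝ) := Nat.cast_pos.2 (Nat.pow_pos (by omega))
  rw [div_le_iff₀ (by positivity)]
  refine le_of_mul_le_mul_right ?_ h3
  linarith

/-- Both words are binary, and the period `w` is nonempty. -/
def binary (p w : List ℕ) : Bool :=
  decide (0 < w.length) && p.all (fun a => decide (a ≤ 1)) && w.all (fun a => decide (a ≤ 1))

/-- Certificate that `p w w w …` is univoque in base `a / 10⁸`, checked on one period with
tails truncated after 40 digits. -/
def cert (p w : List ℕ) (a : ℕ) : Bool :=
  (List.range (p.length + w.length)).all fun n =>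
    if dig p w n = 0 then decide (up a (dig p w) 40 (n + 1) < a ^ 40 * (a - 10 ^ 8))
    else decide (up a (fun i => 1 - dig p w i) 40 (n + 1) < a ^ 40 * (a - 10 ^ 8))

lemma dig_le {p w : List ℕ} (h : binary p w = true) (i : ℕ) : dig p w i ≤ 1 := by
  simp only [binary, Bool.and_eq_true, decide_eq_true_eq, List.all_eq_true] at h
  unfold dig
  split_ifs with hi
  · rw [List.getD_eq_getElem _ _ hi]
    exact h.1.2 _ (List.getElem_mem hi)
  · have := Nat.mod_lt (i - p.length) h.1.1
    rw [List.getD_eq_getElem _ _ this]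
    exact h.2 _ (List.getElem_mem this)

lemma dig_period (p w : List ℕ) {n : ℕ} (hn : p.length ≤ n) :
    dig p w (n + w.length) = dig p w n := by
  unfold dig
  rw [if_neg (by omega), if_neg (by omega), show n + w.length - p.length = n - p.length + w.length by omega,
    Nat.add_mod_right]

lemma univoque_of_cert {p w : List ℕ} {a : ℕ} (ha : 10 ^ 8 < a) (hb : binary p w = true)
    (h : cert p w a = true) : Univoque (base a) (dig p w) := by
  have hd := dig_le hb
  have hq := one_lt_base ha
  have hw : 0 < w.length := by
    simp only [binary, Bool.and_eq_true, decide_eq_true_eq] at hb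
    exact hb.1.1
  intro n
  induction n using Nat.strong_induction_on with
  | _ n ih =>
    by_cases hn : n < p.length + w.length
    · simp only [cert, List.all_eq_true, List.mem_range] at h
      have hc := h n hn
      refine ⟨fun h0 => ?_, fun h1 => ?_⟩
      · rw [if_pos h0, decide_eq_true_eq] at hc
        exact tl_lt_one_of_up ha hd hc
      · rw [if_neg (by omega), decide_eq_true_eq] at hc
        rw [← tl_compl hq hd]
        exact tl_lt_one_of_up ha (one_sub_le _) hc
    · have h1 := ih (n - w.length) (by omega)
      have h2 : dig p w (n - w.length) = dig p w n := by
        rw [← dig_period p w (n := n - w.length) (by omega)]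
        congr 1
        omega
      have h3 : tl (base a) (dig p w) (n - w.length + 1) = tl (base a) (dig p w) (n + 1) := by
        refine tl_congr fun i => ?_
        rw [← dig_period p w (n := n - w.length + 1 + i) (by omega)]
        congr 1
        omega
      rwa [h2, h3] at h1

/-- A single sequence `p w w w …`, univoque in base `q₁`, provides unique expansions for all `x`
between its values in the bases `q₂` and `q₁`, by the intermediate value theorem. -/
lemma cover (p w : List ℕ) (a c : ℕ) {q₂ x : ℝ} (ha : 10 ^ 8 < a) (hqq : base a ≤ q₂) (h2 : q₂ ≤ 2)
    (hb : binary p w = true) (h : cert p w a = true) (hlo : tl q₂ (dig p w) 0 ≤ x)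
    (hlow : c * a ^ 40 ≤ low a (dig p w) 40 0 * 10 ^ 8) (hhi : x ≤ c / 10 ^ 8) :
    ∃ q ∈ Icc (base a) q₂, tl q (dig p w) 0 = x ∧ q ∈ UnivSet x := by
  have hd := dig_le hb
  have hq := one_lt_base ha
  obtain ⟨q, hq1, hqx⟩ := intermediate_value_Icc' hqq (tl_continuousOn hq hd 0)
    ⟨hlo, hhi.trans (le_tl_of_low ha hd hlow)⟩
  refine ⟨q, hq1, hqx, ?_⟩
  rw [← hqx]
  exact ((univoque_of_cert ha hb h).mono hq hq1.1 hd).mem (by linarith [hq1.1]) (hq1.2.trans h2) hd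

lemma cover_rat (p w : List ℕ) (a₁ a₂ c₁ c₂ : ℕ) {x : ℝ}
    (h : (decide (10 ^ 8 < a₁) && decide (a₁ ≤ a₂) && decide (a₂ ≤ 2 * 10 ^ 8) && binary p w &&
      cert p w a₁ && decide (up a₂ (dig p w) 40 0 * 10 ^ 8 ≤ c₁ * (a₂ ^ 40 * (a₂ - 10 ^ 8))) &&
      decide (c₂ * a₁ ^ 40 ≤ low a₁ (dig p w) 40 0 * 10 ^ 8)) = true)
    (hx₁ : c₁ / 10 ^ 8 ≤ x) (hx₂ : x ≤ c₂ / 10 ^ 8) : qs x ≤ base a₂ := by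
  simp only [Bool.and_eq_true, decide_eq_true_eq] at h
  obtain ⟨⟨⟨⟨⟨⟨h1, h2⟩, h3⟩, h4⟩, h5⟩, h6⟩, h7⟩ := h
  have h3' : (a₂ : ℝ) ≤ 2 * 10 ^ 8 := by exact_mod_cast h3
  obtain ⟨q, hq, -, hU⟩ := cover p w a₁ c₂ (q₂ := base a₂) (x := x) h1
    (by unfold base; gcongr) (by unfold base; linarith) h4 h5
    ((tl_le_of_up (h1.trans_le h2) (dig_le h4) h6).trans hx₁) h7 hx₂
  exact (qs_le hU).trans hq.2

/-! ### The extremal base -/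

/-- The number `1/q_G`. -/
def xG : ℝ := (Real.sqrt 5 - 1) / 2

lemma xG_sq : xG ^ 2 + xG = 1 := by
  have : Real.sqrt 5 ^ 2 = 5 := Real.sq_sqrt (by norm_num)
  unfold xG
  linear_combination this / 4

lemma xG_gt : 0.618033988 < xG := by
  have : (2.236067976 : ℝ) < Real.sqrt 5 := Real.lt_sqrt_of_sq_lt (by norm_num)
  unfold xG
  linarith

lemma xG_lt : xG < 0.618033989 := by
  have : Real.sqrt 5 < (2.236067978 : ℝ) := by
    rw [Real.sqrt_lt' (by norm_num)]
    norm_num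
  unfold xG
  linarith

lemma maxDigits_eq : maxDigits = dig [1, 0, 0] [1, 0, 0, 0, 1, 1, 0, 0, 0, 1, 1, 0, 0] := by
  funext i
  simp [maxDigits, dig]

lemma maxDigits_le (i : ℕ) : maxDigits i ≤ 1 := by
  rw [maxDigits_eq]
  exact dig_le (by decide) i

/-- In base `1.888444`, slightly below `r`, the extremal sequence is still univoque. -/
lemma maxDigits_univoque : Univoque (base 188844400) maxDigits := by
  rw [maxDigits_eq]
  exact univoque_of_cert (by norm_num) (by decide) (by decide +kernel)

lemma lt_base {r : ℝ} (hr : 1 < r) (h : tl r maxDigits 0 = xG) : 1.8884533 < r := by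
  by_contra hcon
  push Not at hcon
  have h1 := tl_anti hr hcon maxDigits_le 0
  have h2 := le_tl_of_low (a := 188845330) (c := 61803399) (N := 40) (by norm_num) maxDigits_le
    (n := 0) (by decide +kernel)
  have h5 := xG_lt
  norm_num [base] at h1 h2 h5
  linarith

lemma base_lt {r : ℝ} (h : tl r maxDigits 0 = xG) : r < 1.8884534 := by
  by_contra hcon
  push Not at hcon
  have h1 := tl_anti (by norm_num) hcon maxDigits_le 0
  have h2 := tl_le_of_up (a := 188845340) (c := 61803398) (N := 40) (by norm_num) maxDigits_le
    (n := 0) (by decide +kernel)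
  have h5 := xG_gt
  norm_num [base] at h1 h2 h5
  linarith

lemma base_mem {r : ℝ} (hr : 1 < r) (h : tl r maxDigits 0 = xG) : r ∈ UnivSet xG := by
  have h1 := lt_base hr h
  have h2 := base_lt h
  rw [← h]
  refine (maxDigits_univoque.mono (one_lt_base (by norm_num)) ?_ maxDigits_le).mem hr ?_ maxDigits_le
  · norm_num [base] at h1 ⊢
    linarith
  · norm_num at h2
    linarith

lemma base_poly {r : ℝ} (hr : 1 < r) (h : tl r maxDigits 0 = xG) :
    r ^ 26 - r ^ 25 - r ^ 24 - r ^ 22 - 2 * r ^ 21 - 2 * r ^ 18 - 3 * r ^ 17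
      - 2 * r ^ 16 - 2 * r ^ 14 - 5 * r ^ 13 - r ^ 12 - r ^ 10 - 3 * r ^ 9
      - r ^ 8 - r ^ 5 - r ^ 4 + 1 = 0 := by
  have hs := tl_succ hr maxDigits_le
  have hper : tl r maxDigits 16 = tl r maxDigits 3 := by
    refine tl_congr fun i => ?_
    rw [maxDigits_eq, show 16 + i = 3 + i + 13 by ring]
    exact dig_period [1, 0, 0] [1, 0, 0, 0, 1, 1, 0, 0, 0, 1, 1, 0, 0]
      (show 3 ≤ 3 + i by omega)
  have e0 : r * xG - 1 = tl r maxDigits 1 := by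
    have := hs 0
    rw [h] at this
    simp [maxDigits] at this
    linarith
  have e1 : r ^ 2 * (r * xG - 1) = tl r maxDigits 3 := by
    have h1 := hs 1
    have h2 := hs 2
    simp [maxDigits] at h1 h2
    rw [e0, ← h2, ← h1]
    ring
  have e2 : r ^ 13 * tl r maxDigits 3
      = r ^ 12 + r ^ 8 + r ^ 7 + r ^ 3 + r ^ 2 + tl r maxDigits 3 := by
    have h3 := hs 3
    have h4 := hs 4
    have h5 := hs 5
    have h6 := hs 6
    have h7 := hs 7
    have h8 := hs 8
    have h9 := hs 9
    have h10 := hs 10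
    have h11 := hs 11
    have h12 := hs 12
    have h13 := hs 13
    have h14 := hs 14
    have h15 := hs 15
    simp [maxDigits] at h3 h4 h5 h6 h7 h8 h9 h10 h11 h12 h13 h14 h15
    linear_combination r ^ 12 * h3 + r ^ 11 * h4 + r ^ 10 * h5 + r ^ 9 * h6 + r ^ 8 * h7
      + r ^ 7 * h8 + r ^ 6 * h9 + r ^ 5 * h10 + r ^ 4 * h11 + r ^ 3 * h12 + r ^ 2 * h13
      + r * h14 + h15 + hper
  have h0 : r ^ 3 ≠ 0 := by positivity
  have e3 : r ^ 12 + r ^ 9 + r ^ 5 + r ^ 4 + 1 - xG * (r ^ 13 - 1) = 0 := by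
    refine (mul_eq_zero.1 ?_).resolve_left h0
    linear_combination -e2 + (r ^ 13 - 1) * (-e1)
  linear_combination (-(r ^ 13 - 1) - (r ^ 12 + r ^ 9 + r ^ 5 + r ^ 4 + 1) - xG * (r ^ 13 - 1)) * e3
    - (r ^ 13 - 1) ^ 2 * xG_sq

/-- If the first digit of a univoque expansion of `1/q_G` is `0`, then the first block `01`
yields `q (q - 1) > 1`, while `q / q_G < 1`; so the first digit is `1`. -/
lemma first_digit {q : ℝ} (hq : 1 < q) {d : ℕ → ℕ} (hd : ∀ i, d i ≤ 1)
    (hx : tl q d 0 = xG) (hu : Univoque q d) : d 0 = 1 := by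
  by_contra h0
  have h0 : d 0 = 0 := by have := hd 0; omega
  have hs := tl_succ hq hd
  have hqx : q * xG < 1 := by
    have := hs 0
    have := (hu 0).1 h0
    simp [h0, hx] at *
    linarith
  have hex : ∃ n, d n = 1 := by
    by_contra hcon
    push Not at hcon
    have hz : ∀ n, d n = 0 := fun n => by have := hd n; have := hcon n; omega
    have : tl q d 0 = 0 := by simp [tl, hz]
    have := xG_gt
    norm_num at *
    linarith
  classical
  obtain ⟨m, hm⟩ : ∃ m, Nat.find hex = m + 1 :=
    Nat.exists_eq_succ_of_ne_zero fun h => by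
      have := Nat.find_spec hex
      rw [h] at this
      omega
  have hm1 : d (m + 1) = 1 := hm ▸ Nat.find_spec hex
  have hm0 : d m = 0 := by
    have := Nat.find_min hex (m := m) (by omega)
    have := hd m
    omega
  have a := (hu m).1 hm0
  have b := (hu (m + 1)).2 hm1
  have c := hs (m + 1)
  rw [hm1] at c
  push_cast at c
  have hq1 : 0 < q - 1 := by linarith
  have e : 1 / (q - 1) < q := by nlinarith
  rw [div_lt_iff₀ hq1] at e
  have := xG_sq
  have := xG_gt
  norm_num at this
  have f : q < xG + 1 := by nlinarith
  nlinarith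

/-- In a univoque expansion of `1/q_G` starting with `100`, the fourth digit is `1`. -/
lemma fourth_digit {q : ℝ} (hq : 1 < q) {d : ℕ → ℕ} (hd : ∀ i, d i ≤ 1)
    (hx : tl q d 0 = xG) (hu : Univoque q d) (h0 : d 0 = 1) (h1 : d 1 = 0) (h2 : d 2 = 0) :
    d 3 = 1 := by
  by_contra h3
  have h3 : d 3 = 0 := by have := hd 3; omega
  have hs := tl_succ hq hd
  have s0 := hs 0
  have s1 := hs 1
  have s2 := hs 2
  have s3 := hs 3
  have u0 := (hu 0).2 h0
  have u3 := (hu 3).1 h3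
  simp only [h0, h1, h2, h3, hx] at s0 s1 s2 s3
  norm_num at s0 s1 s2 s3 u0 u3
  have hx2 := xG_sq
  have hq1 : 0 < q - 1 := by linarith
  have e : (q - 1)⁻¹ < q * xG := by linarith
  have e' : 0 < xG * q ^ 2 - xG * q - 1 := by
    rw [inv_lt_iff_one_lt_mul₀ hq1] at e
    nlinarith
  have t4 : tl q d 4 = q ^ 3 * (q * xG - 1) := by
    linear_combination -s3 - q * s2 - q ^ 2 * s1 - q ^ 3 * s0
  have hxpos : 0 < xG := by have := xG_gt; norm_num at this; linarith
  have hxlt : xG < 1 := by nlinarith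
  -- `q³(qx - 1) - 1` factors because `x² + x = 1`.
  have f : tl q d 4 - 1 = (xG * q ^ 2 - xG * q - 1) * (q ^ 2 - xG * q + 1) := by
    rw [t4]
    linear_combination (q ^ 3 - q ^ 2) * hx2
  have g : 0 < q ^ 2 - xG * q + 1 := by nlinarith
  have := mul_pos e' g
  linarith

/-- The value of `0001100011001` in base `q` is below `1/(q-1) - 1`. After cancelling common terms
in `1/(q-1) = ∑ q⁻ⁱ` the inequality becomes monotone in `q`, so it need only be checked at an upper
bound for `r`; there it holds by about `2·10⁻⁵`. -/
lemma margin {q : ℝ} (hq : 1 < q) (hq2 : q ≤ 1.8884534) :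
    q⁻¹ ^ 4 + q⁻¹ ^ 5 + q⁻¹ ^ 9 + q⁻¹ ^ 10 + q⁻¹ ^ 13 + 1 < 1 / (q - 1) := by
  have hq1 : 0 < q - 1 := by linarith
  have h0 : 0 < q := by linarith
  have e : 1 / (q - 1) = q⁻¹ + q⁻¹ ^ 2 + q⁻¹ ^ 3 + q⁻¹ ^ 4 + q⁻¹ ^ 5 + q⁻¹ ^ 6 + q⁻¹ ^ 7 + q⁻¹ ^ 8
      + q⁻¹ ^ 9 + q⁻¹ ^ 10 + q⁻¹ ^ 11 + q⁻¹ ^ 12 + q⁻¹ ^ 13 + q⁻¹ ^ 13 * (1 / (q - 1)) := by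
    field_simp
    ring
  set v : ℝ := (1.8884534 : ℝ)⁻¹ with hv
  have huv : v ≤ q⁻¹ := inv_anti₀ h0 hq2
  have hvp : 0 < v := by positivity
  have hinv : 1 / (1.8884534 - 1) ≤ 1 / (q - 1) := by
    apply one_div_le_one_div_of_le hq1
    linarith
  have key : 1 < v + v ^ 2 + v ^ 3 + v ^ 6 + v ^ 7 + v ^ 8 + v ^ 11 + v ^ 12
      + v ^ 13 * (1 / (1.8884534 - 1)) := by
    rw [hv]
    norm_num
  have mono : v + v ^ 2 + v ^ 3 + v ^ 6 + v ^ 7 + v ^ 8 + v ^ 11 + v ^ 12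
      + v ^ 13 * (1 / (1.8884534 - 1)) ≤ q⁻¹ + q⁻¹ ^ 2 + q⁻¹ ^ 3 + q⁻¹ ^ 6 + q⁻¹ ^ 7 + q⁻¹ ^ 8
      + q⁻¹ ^ 11 + q⁻¹ ^ 12 + q⁻¹ ^ 13 * (1 / (q - 1)) := by
    gcongr
  linarith

/-- After a digit `1` followed by an initial part of `000110001100`, a univoque expansion
cannot have the digit `0` where the periodic continuation `(0001100011001)^∞` has a `1`. -/
lemma no_drop {q : ℝ} (hq : 1 < q) (hq2 : q ≤ 1.8884534) {d : ℕ → ℕ} (hd : ∀ i, d i ≤ 1)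
    (hu : Univoque q d) (k j : ℕ) (hj : j ∈ [4, 5, 9, 10, 13])
    (hpre : ∀ i < j, d (3 + 13 * k + i) = maxDigits (3 + i)) (h0 : d (3 + 13 * k + j) = 0) :
    False := by
  have hp : 0 < q := by linarith
  obtain ⟨u, hu'⟩ : ∃ u, u = q⁻¹ := ⟨_, rfl⟩
  have up : 0 < u := by rw [hu']; positivity
  have hs : ∀ n, tl q d n = u * (d n + tl q d (n + 1)) := by
    intro n
    rw [← tl_succ hq hd n, hu']
    field_simp
  have hm := margin hq hq2
  rw [← hu'] at hm
  set n := 3 + 13 * k with hn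
  have d0 := hpre 0 (by revert j; simp)
  have ht : tl q d (n + j) < u := by
    rw [hs, h0]
    have := (hu _).1 h0
    push_cast
    nlinarith
  have hlast := (hu n).2 (by simpa [maxDigits] using d0)
  have s1 := hs (n + 1)
  have s2 := hs (n + 2)
  have s3 := hs (n + 3)
  have s4 := hs (n + 4)
  have s5 := hs (n + 5)
  have s6 := hs (n + 6)
  have s7 := hs (n + 7)
  have s8 := hs (n + 8)
  have s9 := hs (n + 9)
  have s10 := hs (n + 10)
  have s11 := hs (n + 11)
  have s12 := hs (n + 12)
  have p1 := hpre 1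
  have p2 := hpre 2
  have p3 := hpre 3
  have p4 := hpre 4
  have p5 := hpre 5
  have p6 := hpre 6
  have p7 := hpre 7
  have p8 := hpre 8
  have p9 := hpre 9
  have p10 := hpre 10
  have p11 := hpre 11
  have p12 := hpre 12
  have q4 : 0 < u ^ 4 := by positivity
  have q5 : 0 < u ^ 5 := by positivity
  have q9 : 0 < u ^ 9 := by positivity
  have q10 : 0 < u ^ 10 := by positivity
  have q13 : 0 < u ^ 13 := by positivity
  simp only [List.mem_cons, List.not_mem_nil, or_false] at hj
  rcases hj with rfl | rfl | rfl | rfl | rfl <;>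
    simp [maxDigits] at p1 p2 p3 p4 p5 p6 p7 p8 p9 p10 p11 p12
  · simp only [p1, p2, p3] at s1 s2 s3
    have e : tl q d (n + 1) = u ^ 3 * tl q d (n + 4) := by
      rw [s1, s2, s3]; push_cast; ring
    have := mul_lt_mul_of_pos_left ht (pow_pos up 3)
    linarith
  · simp only [p1, p2, p3, p4] at s1 s2 s3 s4
    have e : tl q d (n + 1) = u ^ 4 + u ^ 4 * tl q d (n + 5) := by
      rw [s1, s2, s3, s4]; push_cast; ring
    have := mul_lt_mul_of_pos_left ht (pow_pos up 4)
    linarith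
  · simp only [p1, p2, p3, p4, p5, p6, p7, p8] at s1 s2 s3 s4 s5 s6 s7 s8
    have e : tl q d (n + 1) = u ^ 4 + u ^ 5 + u ^ 8 * tl q d (n + 9) := by
      rw [s1, s2, s3, s4, s5, s6, s7, s8]; push_cast; ring
    have := mul_lt_mul_of_pos_left ht (pow_pos up 8)
    linarith
  · simp only [p1, p2, p3, p4, p5, p6, p7, p8, p9] at s1 s2 s3 s4 s5 s6 s7 s8 s9
    have e : tl q d (n + 1) = u ^ 4 + u ^ 5 + u ^ 9 + u ^ 9 * tl q d (n + 10) := by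
      rw [s1, s2, s3, s4, s5, s6, s7, s8, s9]; push_cast; ring
    have := mul_lt_mul_of_pos_left ht (pow_pos up 9)
    linarith
  · simp only [p1, p2, p3, p4, p5, p6, p7, p8, p9, p10, p11, p12]
      at s1 s2 s3 s4 s5 s6 s7 s8 s9 s10 s11 s12
    have e : tl q d (n + 1) = u ^ 4 + u ^ 5 + u ^ 9 + u ^ 10 + u ^ 12 * tl q d (n + 13) := by
      rw [s1, s2, s3, s4, s5, s6, s7, s8, s9, s10, s11, s12]; push_cast; ring
    have := mul_lt_mul_of_pos_left ht (pow_pos up 12)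
    linarith

lemma maxDigits_shift (k i : ℕ) : maxDigits (3 + 13 * k + i) = maxDigits (3 + i) := by
  induction k with
  | zero => rfl
  | succ k ih =>
    rw [← ih, maxDigits_eq, show 3 + 13 * (k + 1) + i = 3 + 13 * k + i + 13 by ring]
    exact dig_period [1, 0, 0] [1, 0, 0, 0, 1, 1, 0, 0, 0, 1, 1, 0, 0]
      (show 3 ≤ 3 + 13 * k + i by omega)

/-- Below `r` the number `1/q_G` has no unique expansion: at the first digit where such an
expansion differs from the extremal sequence, an excess contradicts monotonicity of the tails
in the base and a deficit contradicts the univoque conditions. -/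
lemma not_mem_of_lt {r q : ℝ} (hr : 1 < r) (h : tl r maxDigits 0 = xG) (hqr : q < r) :
    q ∉ UnivSet xG := by
  intro hmem
  have hq : 1 < q := hmem.1.1
  have hq2 : q ≤ 1.8884534 := (hqr.trans (base_lt h)).le
  obtain ⟨d, hd, hx, hu⟩ := univoque_of_mem hmem
  have hru : Univoque r maxDigits := by
    refine maxDigits_univoque.mono (one_lt_base (by norm_num)) ?_ maxDigits_le
    have h1 := lt_base hr h
    norm_num [base] at h1 ⊢
    linarith
  have hs := tl_succ hq hd
  have hS := tl_succ hr maxDigits_le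
  have hle : ∀ n, (∀ i < n, d i = maxDigits i) → tl q d n ≤ tl r maxDigits n := by
    intro n
    induction n with
    | zero => intro _; rw [hx, h]
    | succ n ih =>
      intro hn
      have i1 := ih fun i hi => hn i (by omega)
      have i2 := hn n (by omega)
      have i3 := hs n
      have i4 := hS n
      have i5 := tl_nonneg hq d n
      rw [i2] at i3
      nlinarith
  have hd0 := first_digit hq hd hx hu
  have key : ∀ n, d n = maxDigits n := by
    intro n
    induction n using Nat.strong_induction_on with
    | _ n ih =>
      by_contra hne
      have hdn := hd n
      have hmn := maxDigits_le n
      rcases (by omega : d n = 1 ∧ maxDigits n = 0 ∨ d n = 0 ∧ maxDigits n = 1) with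
        ⟨a, b⟩ | ⟨a, b⟩
      · have i1 := hle n ih
        have i2 := hs n
        have i3 := hS n
        have i4 := (hru n).1 b
        have i5 := tl_nonneg hq d (n + 1)
        rw [a] at i2
        rw [b] at i3
        push_cast at i2 i3
        have i6 := tl_nonneg hr maxDigits n
        nlinarith
      · rcases lt_or_ge n 3 with hn | hn
        · interval_cases n
          · omega
          · simp [maxDigits] at b
          · simp [maxDigits] at b
        · obtain ⟨k, j, hj, rfl⟩ : ∃ k j, j < 13 ∧ n = 3 + 13 * k + j :=
            ⟨(n - 3) / 13, (n - 3) % 13, Nat.mod_lt _ (by norm_num), by omega⟩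
          rw [maxDigits_shift] at b
          have hpre : ∀ i < j, d (3 + 13 * k + i) = maxDigits (3 + i) := fun i hi => by
            rw [ih _ (by omega), maxDigits_shift]
          have hcase : j = 0 ∨ j ∈ [4, 5, 9, 10, 13] := by
            interval_cases j <;> simp [maxDigits] at b ⊢
          rcases hcase with rfl | hj'
          · cases k with
            | zero =>
              have h1 := ih 1 (by omega)
              have h2 := ih 2 (by omega)
              have := fourth_digit hq hd hx hu hd0 (by simpa [maxDigits] using h1)
                (by simpa [maxDigits] using h2)
              simp at a
              omega
            | succ k =>
              refine no_drop hq hq2 hd hu k 13 (by simp) (fun i hi => ?_) (by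
                rw [← a]; congr 1)
              rw [ih _ (by omega), maxDigits_shift]
          · exact no_drop hq hq2 hd hu k j hj' hpre a
  have hdd : d = maxDigits := funext key
  subst hdd
  have a := hs 0
  have b := hS 0
  have c := tl_anti hq hqr.le hd 1
  have := xG_gt
  norm_num at this
  rw [hx] at a
  rw [h] at b
  norm_num at a b
  nlinarith

lemma qs_xG {r : ℝ} (hr : 1 < r) (h : tl r maxDigits 0 = xG) : qs xG = r := by
  refine le_antisymm (qs_le (base_mem hr h)) (le_csInf ⟨r, base_mem hr h⟩ fun q hq => ?_)
  by_contra hcon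
  exact not_mem_of_lt hr h (not_le.1 hcon) hq

/-! ### Numbers other than `1/q_G` -/

/-- A zero can be put in front of the unique expansion of `x < 1`. -/
lemma univSet_div {q x : ℝ} (h : q ∈ UnivSet x) (hx : x < 1) : q ∈ UnivSet (x / q) := by
  obtain ⟨d, hd, hdx, hu⟩ := univoque_of_mem h
  have hq : 1 < q := h.1.1
  have hq0 : q ≠ 0 := by linarith
  let e : ℕ → ℕ := fun i => if i = 0 then 0 else d (i - 1)
  have he : ∀ i, e i ≤ 1 := by
    intro i
    simp only [e]
    split_ifs
    · simp
    · exact hd _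
  have het : ∀ n, tl q e (n + 1) = tl q d n := fun n => tl_congr fun i => by
    simp only [e]
    rw [if_neg (by omega)]
    congr 1
    omega
  have h0 : tl q e 0 = x / q := by
    have := tl_succ hq he 0
    rw [het, hdx] at this
    rw [eq_div_iff hq0, mul_comm, this]
    simp [e]
  rw [← h0]
  refine Univoque.mem hq h.1.2 he fun n => ?_
  cases n with
  | zero =>
    rw [het, hdx]
    exact ⟨fun _ => hx, fun h1 => by simp [e] at h1⟩
  | succ n =>
    rw [het]
    exact hu n

/-- `1/(q²-1)` has the expansion `(01)^∞`, which is unique in all bases `q > q_G`. -/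
lemma mem_univSet_alt {q : ℝ} (hq : 1 < q) (hq2 : q ≤ 2) (hG : q + 1 < q ^ 2) :
    q ∈ UnivSet (1 / (q ^ 2 - 1)) := by
  have hd : ∀ i : ℕ, i % 2 ≤ 1 := fun i => by omega
  have hs := tl_succ hq hd
  have hp : 0 < q ^ 2 - 1 := by linarith
  have hq1 : 0 < q - 1 := by linarith
  have ht : ∀ n, tl q (fun i => i % 2) n
      = (q * ((n % 2 : ℕ) : ℝ) + (((n + 1) % 2 : ℕ) : ℝ)) / (q ^ 2 - 1) := by
    intro n
    have hper : tl q (fun i => i % 2) (n + 2) = tl q (fun i => i % 2) n :=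
      tl_congr fun i => by omega
    have a := hs n
    have b := hs (n + 1)
    rw [eq_div_iff hp.ne']
    linear_combination q * a + b + hper
  have h0 : tl q (fun i => i % 2) 0 = 1 / (q ^ 2 - 1) := by
    rw [ht]
    norm_num
  rw [← h0]
  refine Univoque.mem hq hq2 hd fun n => ⟨fun hn => ?_, fun hn => ?_⟩
  · rw [ht, show (n + 1) % 2 = 1 by omega, show (n + 1 + 1) % 2 = 0 by omega, div_lt_one hp]
    push_cast
    linarith
  · rw [ht, show (n + 1) % 2 = 0 by omega, show (n + 1 + 1) % 2 = 1 by omega]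
    have e : 1 / (q - 1) = (q + 1) / (q ^ 2 - 1) := by
      rw [div_eq_div_iff hq1.ne' hp.ne']
      ring
    rw [e, ← sub_div, div_lt_one hp]
    push_cast
    linarith

lemma mem_univSet_alt_pow {q : ℝ} (hq : 1 < q) (hq2 : q ≤ 2) (hG : q + 1 < q ^ 2) (k : ℕ) :
    q ∈ UnivSet (1 / (q ^ 2 - 1) / q ^ k) := by
  induction k with
  | zero => simpa using mem_univSet_alt hq hq2 hG
  | succ k ih =>
    rw [pow_succ q k, ← div_div]
    refine univSet_div ih ?_
    have h1 : 1 / (q ^ 2 - 1) < 1 := by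
      rw [div_lt_one (by linarith)]
      linarith
    have h2 : 1 / (q ^ 2 - 1) / q ^ k ≤ 1 / (q ^ 2 - 1) :=
      div_le_self (div_nonneg zero_le_one (by linarith)) (one_le_pow₀ hq.le)
    linarith

/-- Numbers `x ≥ 1` have the unique expansion `1^∞` in base `1 + 1/x`. -/
lemma qs_le_of_one_le {x : ℝ} (hx : 1 ≤ x) : qs x ≤ 1 + 1 / x := by
  have hx0 : 0 < x := by linarith
  have hq : 1 < 1 + 1 / x := by
    have : 0 < 1 / x := by positivity
    linarith
  have hd : ∀ i : ℕ, (fun _ : ℕ => 0) i ≤ 1 := fun _ => by simp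
  have ht : ∀ n, tl (1 + 1 / x) (fun _ => 1) n = x := by
    intro n
    have h := tl_compl hq hd n
    have h0 : tl (1 + 1 / x) (fun _ => 0) n = 0 := by simp [tl]
    rw [h0] at h
    simpa using h
  refine qs_le ?_
  have hm : 1 + 1 / x ≤ 2 := by
    have : 1 / x ≤ 1 := by rw [div_le_one hx0]; exact hx
    linarith
  have := Univoque.mem hq hm (d := fun _ => 1) (fun _ => le_rfl) fun n => by
    rw [ht]
    simp
  rwa [ht] at this

/-- On `[2/5, 1/q_G)` the sequence `(01)^∞` serves, in base `√(1 + 1/x)`. -/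
lemma qs_le_of_lt_xG {x : ℝ} (h1 : 2 / 5 ≤ x) (h2 : x < xG) : qs x ≤ 1.88 := by
  have hx0 : 0 < x := by linarith
  have hinv : 1 / x ≤ 5 / 2 := by
    rw [div_le_iff₀ hx0]
    linarith
  have hinv' : 1 + xG < 1 / x := by
    rw [lt_div_iff₀ hx0]
    have := xG_sq
    nlinarith
  have hG := xG_gt
  norm_num at hG
  set q := Real.sqrt (1 + 1 / x) with hqdef
  have hq2 : q ^ 2 = 1 + 1 / x := Real.sq_sqrt (by linarith)
  have hq0 : 0 ≤ q := Real.sqrt_nonneg _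
  have hq : 1 < q := by nlinarith
  have hq' : q ≤ 1.88 := by
    norm_num
    nlinarith
  have hgold : 1 + xG < q := by
    have := xG_sq
    nlinarith
  have hm := mem_univSet_alt hq (hq'.trans (by norm_num)) (by nlinarith [xG_sq])
  rw [hq2, add_sub_cancel_left, one_div_one_div] at hm
  exact (qs_le hm).trans hq'

/-- For small `x` the sequences `0^k(01)^∞` serve: with bases restricted to `[1.63, 1.885]`,
the ranges for consecutive `k ≥ 1` overlap. -/
lemma qs_le_of_small {x : ℝ} (hx : 0 < x) (hx1 : x ≤ 0.37) : qs x ≤ 1.885 := by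
  classical
  have hex : ∃ k : ℕ, 1 / ((1.885 : ℝ) ^ 2 - 1) / 1.885 ^ (k + 1) ≤ x := by
    obtain ⟨n, hn⟩ := pow_unbounded_of_one_lt (1 / x) (show (1 : ℝ) < 1.885 by norm_num)
    refine ⟨n, ?_⟩
    rw [div_lt_iff₀ hx] at hn
    rw [div_le_iff₀ (by positivity)]
    have h1 : 1 / ((1.885 : ℝ) ^ 2 - 1) ≤ 1 := by norm_num
    have h2 : (1.885 : ℝ) ^ n ≤ 1.885 ^ (n + 1) := pow_le_pow_right₀ (by norm_num) (by omega)
    nlinarith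
  obtain ⟨k, hk, hk'⟩ : ∃ k : ℕ, 1 / ((1.885 : ℝ) ^ 2 - 1) / 1.885 ^ (k + 1) ≤ x ∧
      x ≤ 1 / ((1.63 : ℝ) ^ 2 - 1) / 1.63 ^ (k + 1) := by
    refine ⟨Nat.find hex, Nat.find_spec hex, ?_⟩
    rcases Nat.eq_zero_or_pos (Nat.find hex) with h | h
    · rw [h]
      norm_num at hx1 ⊢
      linarith
    · obtain ⟨m, hm⟩ := Nat.exists_eq_succ_of_ne_zero h.ne'
      have h1 := not_le.1 (Nat.find_min hex (m := m) (by omega))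
      rw [hm]
      refine h1.le.trans ?_
      rw [div_le_div_iff₀ (by positivity) (by positivity)]
      have h2 : (1.63 : ℝ) ^ m ≤ 1.885 ^ m := by gcongr; norm_num
      have h3 : (0 : ℝ) < 1.63 ^ m := by positivity
      simp only [Nat.succ_eq_add_one, pow_succ]
      norm_num at h2 ⊢
      nlinarith
  have hcont : ContinuousOn (fun q : ℝ => 1 / (q ^ 2 - 1) / q ^ (k + 1)) (Icc 1.63 1.885) := by
    have hp : ∀ q ∈ Icc (1.63 : ℝ) 1.885, q ^ 2 - 1 ≠ 0 ∧ q ^ (k + 1) ≠ 0 := fun q hq => by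
      have h1 : (1.63 : ℝ) ≤ q := hq.1
      norm_num at h1
      have : 0 < q := by linarith
      exact ⟨by nlinarith, by positivity⟩
    exact (ContinuousOn.div (by fun_prop) (by fun_prop) fun q hq => (hp q hq).1).div
      (by fun_prop) fun q hq => (hp q hq).2
  obtain ⟨q, hq, hqx⟩ := intermediate_value_Icc' (by norm_num) hcont ⟨hk, hk'⟩
  have h1 : (1.63 : ℝ) ≤ q := hq.1
  have h2 : q ≤ (1.885 : ℝ) := hq.2
  norm_num at h1
  have hm := mem_univSet_alt_pow (q := q) (by linarith) (by norm_num at h2; linarith)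
    (by nlinarith) (k + 1)
  simp only at hqx
  rw [hqx] at hm
  exact (qs_le hm).trans h2

/-- Just above `1/q_G` the extremal sequence itself serves, in bases just below `r`. -/
lemma qs_lt_of_near {r x : ℝ} (hr : 1 < r) (h : tl r maxDigits 0 = xG) (h1 : xG < x)
    (h2 : x ≤ 0.6180385) : qs x < r := by
  have hlo := lt_base hr h
  have hhi := base_lt h
  norm_num at hlo hhi h2
  obtain ⟨q, hq, hqx, hU⟩ := cover [1, 0, 0] [1, 0, 0, 0, 1, 1, 0, 0, 0, 1, 1, 0, 0]
    188844400 61803850 (q₂ := r) (x := x) (by norm_num)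
    (by norm_num [base]; linarith) (by linarith) (by decide) (by decide +kernel)
    (by rw [← maxDigits_eq, h]; exact h1.le) (by decide +kernel) (by norm_num; linarith)
  refine (qs_le hU).trans_lt (lt_of_le_of_ne hq.2 ?_)
  rintro rfl
  rw [← maxDigits_eq, h] at hqx
  exact h1.ne hqx

/-- On `[0.6180384, 1.21]` and `[0.3496, 0.42]` finitely many eventually periodic sequences
serve. Each application of `cover_rat` lists the preperiod and period, a base above which the
sequence is univoque, an upper base, and a range of `x`; the ranges overlap. -/
lemma qs_le_of_mid {x : ℝ} (h : 0.3496 ≤ x ∧ x ≤ 0.42 ∨ 0.6180384 ≤ x ∧ x ≤ 1.21) :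
    qs x ≤ 1.8884533 := by
  have hb : base 188845330 = 1.8884533 := by norm_num [base]
  rw [← hb]
  norm_num at h
  rcases h with ⟨h1, h2⟩ | ⟨h1, h2⟩
  · exact cover_rat [0] [1, 0, 0, 1] 176000000 _ 34960000 42000000
      (by decide +kernel) (by norm_num; linarith) (by norm_num; linarith)
  rcases le_or_gt x (61807 / 100000) with c | c
  · exact cover_rat [1, 0, 0, 1, 0, 0, 0, 1, 1, 0, 0, 0, 1, 1, 0, 0, 1, 0, 1, 0, 0] [1, 0]
      188838710 _ 61803840 61807000
      (by decide +kernel) (by norm_num; linarith) (by norm_num; linarith)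
  rcases le_or_gt x (6183 / 10000) with c | c
  · exact cover_rat [1, 0, 0, 1, 0, 0, 0, 1, 1, 0, 0, 0, 1, 1, 0, 1, 0, 1] [1, 1, 0, 0]
      188797290 _ 61806960 61830000
      (by decide +kernel) (by norm_num; linarith) (by norm_num; linarith)
  rcases le_or_gt x (619 / 1000) with c | c
  · exact cover_rat [1, 0, 0] [1, 0, 0, 0, 1, 1, 0, 0]
      188671000 _ 61817000 61900000
      (by decide +kernel) (by norm_num; linarith) (by norm_num; linarith)
  rcases le_or_gt x (6246 / 10000) with c | c
  · exact cover_rat [1, 0, 0, 1, 0, 0, 0, 1] [1, 0]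
      187700000 _ 61890000 62460000
      (by decide +kernel) (by norm_num; linarith) (by norm_num; linarith)
  rcases le_or_gt x (647 / 1000) with c | c
  · exact cover_rat [] [1, 0, 0]
      184000000 _ 62190000 64700000
      (by decide +kernel) (by norm_num; linarith) (by norm_num; linarith)
  rcases le_or_gt x (686 / 1000) with c | c
  · exact cover_rat [1, 0, 0] [1, 0]
      181000000 _ 63900000 68600000
      (by decide +kernel) (by norm_num; linarith) (by norm_num; linarith)
  rcases le_or_gt x (75 / 100) with c | c
  · exact cover_rat [] [1, 0, 0, 1]
      176000000 _ 66010000 75000000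
      (by decide +kernel) (by norm_num; linarith) (by norm_num; linarith)
  rcases le_or_gt x (98 / 100) with c | c
  · exact cover_rat [] [1, 0]
      163000000 _ 73600000 98000000
      (by decide +kernel) (by norm_num; linarith) (by norm_num; linarith)
  · exact cover_rat [1] [1, 0]
      163000000 _ 92000000 121000000
      (by decide +kernel) (by norm_num; linarith) (by norm_num; linarith)

lemma qs_lt {r x : ℝ} (hr : 1 < r) (h : tl r maxDigits 0 = xG) (hx : 0 < x) (hne : x ≠ xG) :
    qs x < r := by
  have hlo := lt_base hr h
  rcases le_or_gt x 0.37 with c | c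
  · exact (qs_le_of_small hx c).trans_lt (lt_trans (by norm_num) hlo)
  rcases le_or_gt x 0.42 with c' | c'
  · exact (qs_le_of_mid (.inl ⟨le_trans (by norm_num) c.le, c'⟩)).trans_lt hlo
  rcases lt_trichotomy x xG with e | e | e
  · exact (qs_le_of_lt_xG (le_trans (by norm_num) c'.le) e).trans_lt
      (lt_trans (by norm_num) hlo)
  · exact absurd e hne
  rcases le_or_gt x 0.6180385 with d | d
  · exact qs_lt_of_near hr h e d
  rcases le_or_gt x 1.21 with f | f
  · exact (qs_le_of_mid (.inr ⟨le_trans (by norm_num) d.le, f⟩)).trans_lt hlo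
  · have h1 : (1 : ℝ) ≤ x := le_trans (by norm_num) f.le
    have h2 : 1 / x ≤ 1 / 1.21 := one_div_le_one_div_of_le (by norm_num) f.le
    have h3 := qs_le_of_one_le h1
    norm_num at h2 h3 hlo
    linarith

/-- the maximum of `q_s` equals the base `r` in which
`100(1000110001100)^∞` is an expansion of `(√5-1)/2 = 1/q_G`, it is attained
uniquely at `x = 1/q_G`, and `r` is a root of the given degree-26 polynomial. -/
theorem qs_maximum (r : ℝ) (hr : r ∈ Set.Ioo (1 : ℝ) 2)
    (hrsum : ∑' i : ℕ, (maxDigits i : ℝ) / r ^ (i + 1) = (Real.sqrt 5 - 1) / 2) :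
    qs ((Real.sqrt 5 - 1) / 2) = r ∧
    (∀ x : ℝ, 0 < x → x ≠ (Real.sqrt 5 - 1) / 2 → qs x < r) ∧
    r ^ 26 - r ^ 25 - r ^ 24 - r ^ 22 - 2 * r ^ 21 - 2 * r ^ 18 - 3 * r ^ 17
      - 2 * r ^ 16 - 2 * r ^ 14 - 5 * r ^ 13 - r ^ 12 - r ^ 10 - 3 * r ^ 9
      - r ^ 8 - r ^ 5 - r ^ 4 + 1 = 0 := by
  have h : tl r maxDigits 0 = xG := by
    rw [xG, ← hrsum]
    simp [tl]
  exact ⟨qs_xG hr.1 h, fun x hx hne => qs_lt hr.1 h hx hne, base_poly hr.1 h⟩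
end
end
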